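/- For sufficiently large y, any interval [x − y, x] with x ≥ y + 1 contains a set S of pairwise coprime integers of size ≫ √y / log y such that every element of S has at most (2 log x)/(log y) + O(log x / (log y)²) prime factors counted with multiplicity. -/

import Mathlib

open Real

namespace LSieve

/-- Picard iterates for the delay equation. -/
noncomputable def RR (σ : ℝ) : ℕ → ℝ → ℝ
  | 0 => fun _ => 1
  | n + 1 => fun s => 1 + σ * ∫ u in (2:ℝ)..(max s 2), RR σ n (u - 1) / max (u - 1) 1

noncomputable def Rf (σ : ℝ) (s : ℝ) : ℝ := RR σ ⌈s⌉₊ s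

lemma RR_cont (σ : ℝ) (n : ℕ) : Continuous (RR σ n) := by
  induction n with
  | zero => exact continuous_const
  | succ n ih =>
    have hc : Continuous (fun u : ℝ => RR σ n (u - 1) / max (u - 1) 1) := by
      refine Continuous.div (ih.comp (by fun_prop)) (by fun_prop) ?_
      intro x
      have : (1:ℝ) ≤ max (x - 1) 1 := le_max_right _ _
      linarith
    have h2 : Continuous (fun b : ℝ => ∫ u in (2:ℝ)..b, RR σ n (u - 1) / max (u - 1) 1) :=
      intervalIntegral.continuous_primitive (fun a b => hc.intervalIntegrable a b) 2
    have h3 : Continuous (fun s : ℝ => max s 2) := by fun_prop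
    exact continuous_const.add (continuous_const.mul (h2.comp h3))

lemma RR_stable (σ : ℝ) (n : ℕ) : ∀ s : ℝ, s ≤ n + 2 → RR σ (n + 1) s = RR σ n s := by
  induction n with
  | zero =>
    intro s hs
    have : max s 2 = 2 := max_eq_right (by simpa using hs)
    simp [RR, this]
  | succ n ih =>
    intro s hs
    have key : ∫ u in (2:ℝ)..(max s 2), RR σ (n+1) (u - 1) / max (u - 1) 1
        = ∫ u in (2:ℝ)..(max s 2), RR σ n (u - 1) / max (u - 1) 1 := by
      apply intervalIntegral.integral_congr
      intro u hu
      rw [Set.uIcc_of_le (le_max_right _ _)] at hu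
      have h1 : u ≤ n + 3 := by
        refine hu.2.trans (max_le ?_ ?_)
        · push_cast at hs; linarith
        · have : (0:ℝ) ≤ n := Nat.cast_nonneg n
          linarith
      simp only
      rw [ih (u - 1) (by linarith)]
    have e1 : RR σ (n+1+1) s = 1 + σ * ∫ u in (2:ℝ)..(max s 2), RR σ (n+1) (u - 1) / max (u - 1) 1 := rfl
    have e2 : RR σ (n+1) s = 1 + σ * ∫ u in (2:ℝ)..(max s 2), RR σ n (u - 1) / max (u - 1) 1 := rfl
    rw [e1, e2, key]

lemma RR_stable' (σ : ℝ) (n m : ℕ) (hnm : n ≤ m) (s : ℝ) (hs : s ≤ n + 2) :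
    RR σ m s = RR σ n s := by
  induction m, hnm using Nat.le_induction with
  | base => rfl
  | succ m hm ih =>
    rw [RR_stable σ m s, ih]
    have : (n:ℝ) ≤ m := by exact_mod_cast hm
    linarith

lemma Rf_eq (σ : ℝ) (n : ℕ) (s : ℝ) (hs : s ≤ n + 2) : Rf σ s = RR σ n s := by
  unfold Rf
  have h1 : s ≤ (⌈s⌉₊ : ℝ) + 2 := by
    have := Nat.le_ceil s
    linarith
  rcases le_total n ⌈s⌉₊ with h | h
  · exact RR_stable' σ n _ h s hs
  · exact (RR_stable' σ _ n h s h1).symm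

lemma Rf_cont (σ : ℝ) : Continuous (Rf σ) := by
  rw [continuous_iff_continuousAt]
  intro s
  have h1 : s < (⌈s⌉₊ : ℝ) + 2 := by
    have := Nat.le_ceil s
    linarith
  have : Rf σ =ᶠ[nhds s] RR σ ⌈s⌉₊ := by
    filter_upwards [Iio_mem_nhds h1] with x hx
    exact Rf_eq σ _ x (le_of_lt hx)
  exact (RR_cont σ _).continuousAt.congr this.symm

lemma Rf_integrand_cont (σ : ℝ) : Continuous (fun u : ℝ => Rf σ (u - 1) / max (u - 1) 1) := by
  refine Continuous.div ((Rf_cont σ).comp (by fun_prop)) (by fun_prop) ?_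
  intro x
  have : (1:ℝ) ≤ max (x - 1) 1 := le_max_right _ _
  linarith

lemma Rf_int (σ : ℝ) (s : ℝ) :
    Rf σ s = 1 + σ * ∫ u in (2:ℝ)..(max s 2), Rf σ (u - 1) / max (u - 1) 1 := by
  have h1 : s ≤ ((⌈s⌉₊ + 1 : ℕ) : ℝ) + 2 := by
    have := Nat.le_ceil s
    push_cast
    linarith
  rw [Rf_eq σ (⌈s⌉₊ + 1) s h1]
  have e : RR σ (⌈s⌉₊+1) s = 1 + σ * ∫ u in (2:ℝ)..(max s 2), RR σ ⌈s⌉₊ (u - 1) / max (u - 1) 1 := rfl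
  rw [e]
  congr 2
  apply intervalIntegral.integral_congr
  intro u hu
  rw [Set.uIcc_of_le (le_max_right _ _)] at hu
  simp only
  rw [Rf_eq σ ⌈s⌉₊ (u - 1)]
  have h2 := Nat.le_ceil s
  have h3 : (0:ℝ) ≤ (⌈s⌉₊ : ℝ) := Nat.cast_nonneg _
  have : u ≤ (⌈s⌉₊ : ℝ) + 2 := hu.2.trans (max_le (by linarith) (by linarith))
  linarith

lemma Rf_of_le (σ : ℝ) (s : ℝ) (hs : s ≤ 2) : Rf σ s = 1 := by
  rw [Rf_int, max_eq_right hs]; simp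

lemma Rf_deriv (σ : ℝ) (s : ℝ) (hs : 2 < s) :
    HasDerivAt (Rf σ) (σ * (Rf σ (s - 1) / (s - 1))) s := by
  have h1 : HasDerivAt (fun b : ℝ => ∫ u in (2:ℝ)..b, Rf σ (u - 1) / max (u - 1) 1)
      (Rf σ (s - 1) / max (s - 1) 1) s :=
    intervalIntegral.integral_hasDerivAt_right ((Rf_integrand_cont σ).intervalIntegrable _ _)
      ((Rf_integrand_cont σ).stronglyMeasurableAtFilter _ _) (Rf_integrand_cont σ).continuousAt
  have h2 := (h1.const_mul σ).const_add 1
  rw [max_eq_left (by linarith : (1:ℝ) ≤ s - 1)] at h2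
  refine h2.congr_of_eventuallyEq ?_
  filter_upwards [Ioi_mem_nhds hs] with x hx
  rw [Rf_int, max_eq_left (le_of_lt hx)]

/-- continuous induction -/
lemma pos_of_step (g : ℝ → ℝ) (a : ℝ) (hg : ContinuousOn g (Set.Ici a))
    (h : ∀ s, a ≤ s → (∀ u, a ≤ u → u < s → 0 < g u) → 0 < g s) : ∀ s, a ≤ s → 0 < g s := by
  by_contra hcon
  push Not at hcon
  obtain ⟨s, hs, hgs⟩ := hcon
  let B : Set ℝ := Set.Ici a ∩ g ⁻¹' Set.Iic 0
  have hBc : IsClosed B := hg.preimage_isClosed_of_isClosed isClosed_Ici isClosed_Iic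
  have hBn : B.Nonempty := ⟨s, hs, hgs⟩
  have hBb : BddBelow B := ⟨a, fun x hx => hx.1⟩
  have hm := hBc.csInf_mem hBn hBb
  have := h (sInf B) hm.1 (fun u hu hus => by
    by_contra hc
    push Not at hc
    exact absurd (csInf_le hBb (show u ∈ B from ⟨hu, hc⟩)) (not_le.mpr hus))
  exact absurd hm.2 (not_le.mpr this)

/-- `r = s (F - f)` -/
lemma r_identity (s : ℝ) (hs : 2 ≤ s) : (s - 1) * Rf (-1) s = ∫ u in (s-1)..s, Rf (-1) u := by
  have hc := Rf_cont (-1)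
  set J : ℝ → ℝ := fun s => (s - 1) * Rf (-1) s - ((∫ u in (0:ℝ)..s, Rf (-1) u) - ∫ u in (0:ℝ)..(s-1), Rf (-1) u) with hJ
  have hprim : ∀ x, HasDerivAt (fun b : ℝ => ∫ u in (0:ℝ)..b, Rf (-1) u) (Rf (-1) x) x := fun x =>
    intervalIntegral.integral_hasDerivAt_right (hc.intervalIntegrable _ _)
      (hc.stronglyMeasurableAtFilter _ _) hc.continuousAt
  have hJc : Continuous J := by
    have h2 : Continuous (fun b : ℝ => ∫ u in (0:ℝ)..b, Rf (-1) u) :=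
      intervalIntegral.continuous_primitive (fun a b => hc.intervalIntegrable a b) 0
    have h3 : Continuous (fun s : ℝ => s - 1) := by fun_prop
    exact (h3.mul hc).sub (h2.sub (h2.comp h3))
  have hJd : ∀ x, 2 < x → HasDerivAt J 0 x := by
    intro x hx
    have h1 := Rf_deriv (-1) x hx
    have h2 : HasDerivAt (fun s : ℝ => s - 1) 1 x := (hasDerivAt_id x).sub_const 1
    have h3 := (hprim (x-1)).comp x h2
    have h4 := (h2.mul h1).sub ((hprim x).sub h3)
    refine h4.congr_deriv ?_
    have : x - 1 ≠ 0 := by linarith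
    have e : (x - 1) * (-1 * (Rf (-1) (x - 1) / (x - 1))) = - Rf (-1) (x - 1) := by
      field_simp
    rw [e]
    ring
  have hJ2 : J 2 = 0 := by
    have e1 : ∫ u in (0:ℝ)..2, Rf (-1) u = 2 := by
      rw [intervalIntegral.integral_congr (g := fun _ => (1:ℝ))]
      · simp
      · intro u hu
        rw [Set.uIcc_of_le (by norm_num)] at hu
        exact Rf_of_le _ _ hu.2
    have e2 : ∫ u in (0:ℝ)..(2-1), Rf (-1) u = 1 := by
      rw [intervalIntegral.integral_congr (g := fun _ => (1:ℝ))]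
      · simp; norm_num
      · intro u hu
        rw [Set.uIcc_of_le (by norm_num)] at hu
        exact Rf_of_le _ _ (by linarith [hu.2])
    simp only [hJ, e1, e2, Rf_of_le (-1) 2 le_rfl]
    norm_num
  have hJs : J s = 0 := by
    rw [← hJ2]
    rcases eq_or_lt_of_le hs with h | h
    · rw [h]
    · obtain ⟨c, hc1, hc2⟩ := exists_hasDerivAt_eq_slope J (fun _ => 0) h hJc.continuousOn
        (fun x hx => hJd x hx.1)
      have : s - 2 ≠ 0 := by linarith
      field_simp at hc2
      linarith
  have e : ∫ u in (s-1)..s, Rf (-1) u = (∫ u in (0:ℝ)..s, Rf (-1) u) - ∫ u in (0:ℝ)..(s-1), Rf (-1) u := by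
    rw [intervalIntegral.integral_interval_sub_left] <;> exact hc.intervalIntegrable _ _
  rw [e]
  simp only [hJ] at hJs
  linarith

lemma r_pos (s : ℝ) : 0 < Rf (-1) s := by
  rcases le_total s 2 with h | h
  · rw [Rf_of_le _ _ h]; norm_num
  · refine pos_of_step (Rf (-1)) 2 (Rf_cont _).continuousOn ?_ s h
    intro s hs ih
    have h1 := r_identity s hs
    have h2 : 0 < ∫ u in (s-1)..s, Rf (-1) u := by
      apply intervalIntegral.intervalIntegral_pos_of_pos_on ((Rf_cont _).intervalIntegrable _ _) _ (by linarith)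
      intro x hx
      rcases le_total x 2 with h | h
      · rw [Rf_of_le _ _ h]; norm_num
      · exact ih x h hx.2
    rw [← h1] at h2
    exact pos_of_mul_pos_right h2 (by linarith)

lemma r_anti : Antitone (Rf (-1)) := by
  have h2 : AntitoneOn (Rf (-1)) (Set.Ici 2) := by
    apply antitoneOn_of_deriv_nonpos (convex_Ici 2) (Rf_cont _).continuousOn
    · intro x hx
      rw [interior_Ici] at hx
      exact (Rf_deriv _ x hx).differentiableAt.differentiableWithinAt
    · intro x hx
      rw [interior_Ici] at hx
      rw [(Rf_deriv _ x hx).deriv]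
      have h1 := r_pos (x-1)
      have : (0:ℝ) < x - 1 := by have : (2:ℝ) < x := hx
                                 linarith
      have := div_pos h1 this
      linarith
  intro x y hxy
  rcases le_total y 2 with h | h
  · rw [Rf_of_le _ _ h, Rf_of_le _ _ (hxy.trans h)]
  · rcases le_total x 2 with h' | h'
    · have h3 := h2 Set.self_mem_Ici h h
      rw [Rf_of_le (-1) 2 le_rfl] at h3
      rw [Rf_of_le (-1) x h']
      exact h3
    · exact h2 h' h hxy

lemma r_step (s : ℝ) (hs : 2 ≤ s) : (s - 1) * Rf (-1) s ≤ Rf (-1) (s - 1) := by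
  rw [r_identity s hs]
  calc ∫ u in (s-1)..s, Rf (-1) u ≤ ∫ u in (s-1)..s, Rf (-1) (s-1) := by
        apply intervalIntegral.integral_mono_on (by linarith) ((Rf_cont _).intervalIntegrable _ _)
          (by simp)
        intro x hx
        exact r_anti hx.1
    _ = Rf (-1) (s-1) := by simp

lemma r_le_one (s : ℝ) : Rf (-1) s ≤ 1 := by
  rcases le_total s 2 with h | h
  · rw [Rf_of_le _ _ h]
  · have h3 := r_anti h
    rwa [Rf_of_le (-1) 2 le_rfl] at h3

lemma r_decay (s : ℝ) : Rf (-1) s ≤ exp 20 * exp (-2 * s) := by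
  have key : ∀ n : ℕ, ∀ s : ℝ, s ≤ 10 + n → Rf (-1) s ≤ exp 20 * exp (-2 * s) := by
    intro n
    induction n with
    | zero =>
      intro s hs
      rw [← exp_add]
      refine (r_le_one s).trans (one_le_exp ?_)
      simp at hs
      linarith
    | succ n ih =>
      intro s hs
      rcases le_total s 10 with h | h
      · rw [← exp_add]
        exact (r_le_one s).trans (one_le_exp (by linarith))
      · have h1 := r_step s (by linarith)
        have h2 := ih (s - 1) (by push_cast at hs; linarith)
        have h3 : exp (2:ℝ) ≤ 9 := by
          have := exp_one_lt_d9
          have h4 : exp (2:ℝ) = exp 1 * exp 1 := by rw [← exp_add]; norm_num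
          rw [h4]
          nlinarith [exp_pos (1:ℝ)]
        have h5 : exp (-2 * (s - 1)) = exp (-2*s) * exp 2 := by rw [← exp_add]; ring_nf
        rw [h5] at h2
        have h6 : 9 * Rf (-1) s ≤ (s-1) * Rf (-1) s :=
          mul_le_mul_of_nonneg_right (by linarith) (r_pos s).le
        have h7 : exp 20 * (exp (-2*s) * exp 2) ≤ exp 20 * (exp (-2*s) * 9) := by gcongr
        linarith
  have := Nat.le_ceil s
  exact key ⌈s⌉₊ s (by linarith)

noncomputable def aF (s : ℝ) : ℝ := (Rf 1 s + Rf (-1) s) / 2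
noncomputable def bF (s : ℝ) : ℝ := (Rf 1 s - Rf (-1) s) / 2
noncomputable def F (s : ℝ) : ℝ := aF s / s
noncomputable def f (s : ℝ) : ℝ := bF s / s

end LSieve

open Real

namespace LSieve

lemma aF_cont : Continuous aF := ((Rf_cont 1).add (Rf_cont (-1))).div_const 2
lemma bF_cont : Continuous bF := ((Rf_cont 1).sub (Rf_cont (-1))).div_const 2

lemma bF_of_le (s : ℝ) (hs : s ≤ 2) : bF s = 0 := by
  simp [bF, Rf_of_le _ _ hs]

lemma f_of_le (s : ℝ) (hs : s ≤ 2) : f s = 0 := by simp [f, bF_of_le s hs]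

lemma aF_of_le (s : ℝ) (hs : s ≤ 3) : aF s = 1 := by
  unfold aF
  rw [Rf_int 1 s, Rf_int (-1) s]
  have : ∫ u in (2:ℝ)..(max s 2), Rf 1 (u - 1) / max (u - 1) 1
      = ∫ u in (2:ℝ)..(max s 2), Rf (-1) (u - 1) / max (u - 1) 1 := by
    apply intervalIntegral.integral_congr
    intro u hu
    rw [Set.uIcc_of_le (le_max_right _ _)] at hu
    have h1 : u ≤ 3 := hu.2.trans (max_le hs (by norm_num))
    simp only
    rw [Rf_of_le 1 (u-1) (by linarith), Rf_of_le (-1) (u-1) (by linarith)]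
  rw [this]
  ring

lemma F_of_le (s : ℝ) (hs : s ≤ 3) : F s = 1 / s := by simp [F, aF_of_le s hs]

lemma aF_deriv (s : ℝ) : HasDerivAt aF (f (s - 1)) s := by
  rcases lt_or_ge s 3 with h | h
  · rw [f_of_le (s-1) (by linarith)]
    refine (hasDerivAt_const s (1:ℝ)).congr_of_eventuallyEq ?_
    filter_upwards [Iio_mem_nhds h] with x hx
    exact aF_of_le x (le_of_lt hx)
  · have h1 := ((Rf_deriv 1 s (by linarith)).add (Rf_deriv (-1) s (by linarith))).div_const 2
    refine h1.congr_deriv ?_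
    unfold f bF
    ring

lemma bF_deriv (s : ℝ) (hs : 2 < s) : HasDerivAt bF (F (s - 1)) s := by
  have h1 := ((Rf_deriv 1 s (by linarith)).sub (Rf_deriv (-1) s (by linarith))).div_const 2
  refine h1.congr_deriv ?_
  unfold F aF
  ring

/-- derivative of F -/
noncomputable def dF (s : ℝ) : ℝ := (f (s - 1) - F s) / s
/-- derivative of f -/
noncomputable def df (s : ℝ) : ℝ := if s ≤ 2 then 0 else (F (s - 1) - f s) / s

lemma F_deriv (s : ℝ) (hs : 0 < s) : HasDerivAt F (dF s) s := by
  have h := (aF_deriv s).div (hasDerivAt_id s) (by simpa using hs.ne')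
  refine h.congr_deriv ?_
  unfold dF F
  simp only [id]
  field_simp

lemma f_deriv (s : ℝ) (hs : 2 < s) : HasDerivAt f (df s) s := by
  have h0 : s ≠ 0 := by linarith
  have h := (bF_deriv s hs).div (hasDerivAt_id s) (by simpa using h0)
  refine h.congr_deriv ?_
  unfold df f
  rw [if_neg (not_le.mpr hs)]
  simp only [id]
  field_simp

lemma F_contAt (s : ℝ) (hs : 0 < s) : ContinuousAt F s := (F_deriv s hs).continuousAt

lemma f_cont : Continuous f := by
  have h : f = fun s => bF s / max s 1 := by
    funext s
    rcases le_total s 2 with h | h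
    · simp [f, bF_of_le s h]
    · rw [max_eq_left (by linarith)]; rfl
  rw [h]
  refine bF_cont.div (by fun_prop) ?_
  intro x
  have : (1:ℝ) ≤ max x 1 := le_max_right _ _
  linarith

lemma F_sub_f (s : ℝ) : F s - f s = Rf (-1) s / s := by
  unfold F f aF bF; ring

lemma F_pos_small (s : ℝ) (h0 : 0 < s) (hs : s ≤ 3) : 0 < F s := by
  rw [F_of_le s hs]; positivity

lemma F_contOn_shift : ContinuousOn (fun s => F (s - 1)) (Set.Ici 2) := by
  intro s hs
  have h : (0:ℝ) < s - 1 := by have : (2:ℝ) ≤ s := hs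
                               linarith
  have := (F_contAt (s-1) h).comp (f := fun s : ℝ => s - 1) (by fun_prop : ContinuousAt (fun s : ℝ => s - 1) s)
  exact this.continuousWithinAt

lemma AB_pos (s : ℝ) (hs : 2 ≤ s) : 0 < F s - f (s - 1) ∧ 0 < F (s - 1) - f s := by
  have key := pos_of_step (fun s => min (F s - f (s - 1)) (F (s - 1) - f s)) 2 ?_ ?_ s hs
  · exact lt_min_iff.mp key
  · apply ContinuousOn.inf
    · apply ContinuousOn.sub
      · intro s hs
        exact (F_contAt s (by have : (2:ℝ) ≤ s := hs
                              linarith)).continuousWithinAt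
      · exact (f_cont.comp (by fun_prop)).continuousOn
    · exact F_contOn_shift.sub f_cont.continuousOn
  · intro s hs ih
    have ih1 : ∀ u, 2 ≤ u → u < s → 0 < F u - f (u - 1) := fun u h1 h2 => (lt_min_iff.mp (ih u h1 h2)).1
    have ih2 : ∀ u, 2 ≤ u → u < s → 0 < F (u - 1) - f u := fun u h1 h2 => (lt_min_iff.mp (ih u h1 h2)).2
    have hQ : 0 < F s - f s := by
      rw [F_sub_f]
      have := r_pos s
      have : 0 < s := by linarith
      positivity
    have hf : MonotoneOn f (Set.Icc 2 s) := by
      apply monotoneOn_of_deriv_nonneg (convex_Icc 2 s) f_cont.continuousOn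
      · intro x hx
        rw [interior_Icc] at hx
        exact (f_deriv x hx.1).differentiableAt.differentiableWithinAt
      · intro x hx
        rw [interior_Icc] at hx
        rw [(f_deriv x hx.1).deriv, df, if_neg (not_le.mpr hx.1)]
        have := ih2 x hx.1.le hx.2
        have h3 : 0 < x := by linarith [hx.1]
        positivity
    have hF : AntitoneOn F (Set.Icc 1 s) := by
      apply antitoneOn_of_deriv_nonpos (convex_Icc 1 s)
      · intro x hx
        exact (F_contAt x (by linarith [hx.1])).continuousWithinAt
      · intro x hx
        rw [interior_Icc] at hx
        exact (F_deriv x (by linarith [hx.1])).differentiableAt.differentiableWithinAt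
      · intro x hx
        rw [interior_Icc] at hx
        have h3 : 0 < x := by linarith [hx.1]
        rw [(F_deriv x h3).deriv, dF]
        apply div_nonpos_of_nonpos_of_nonneg _ h3.le
        rcases le_total 2 x with h | h
        · linarith [ih1 x h hx.2]
        · rw [f_of_le (x-1) (by linarith)]
          linarith [F_pos_small x h3 (by linarith)]
    apply lt_min
    · have : f (s-1) ≤ f s := by
        rcases le_total (s-1) 2 with h | h
        · rw [f_of_le (s-1) h, ← f_of_le 2 le_rfl]
          exact hf ⟨le_rfl, hs⟩ ⟨hs, le_rfl⟩ hs
        · exact hf ⟨h, by linarith⟩ ⟨hs, le_rfl⟩ (by linarith)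
      linarith
    · have : F s ≤ F (s-1) := hF ⟨by linarith, by linarith⟩ ⟨by linarith, le_rfl⟩ (by linarith)
      linarith

lemma A_pos (s : ℝ) (hs : 0 < s) : 0 < F s - f (s - 1) := by
  rcases le_total 2 s with h | h
  · exact (AB_pos s h).1
  · rw [f_of_le (s-1) (by linarith)]
    linarith [F_pos_small s hs (by linarith)]

lemma dF_neg (s : ℝ) (hs : 0 < s) : dF s < 0 := by
  unfold dF
  exact div_neg_of_neg_of_pos (by linarith [A_pos s hs]) hs

lemma df_nonneg (s : ℝ) : 0 ≤ df s := by
  unfold df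
  split_ifs with h
  · exact le_rfl
  · push Not at h
    have := (AB_pos s h.le).2
    have h3 : 0 < s := by linarith
    positivity

lemma f_mono : Monotone f := by
  have h2 : MonotoneOn f (Set.Ici 2) := by
    apply monotoneOn_of_deriv_nonneg (convex_Ici 2) f_cont.continuousOn
    · intro x hx
      rw [interior_Ici] at hx
      exact (f_deriv x hx).differentiableAt.differentiableWithinAt
    · intro x hx
      rw [interior_Ici] at hx
      rw [(f_deriv x hx).deriv]
      exact df_nonneg x
  intro x y hxy
  rcases le_total y 2 with h | h
  · rw [f_of_le x (hxy.trans h), f_of_le y h]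
  · rcases le_total x 2 with h' | h'
    · rw [f_of_le x h', ← f_of_le 2 le_rfl]
      exact h2 Set.self_mem_Ici h h
    · exact h2 h' h hxy

lemma f_nonneg (s : ℝ) : 0 ≤ f s := by
  rcases le_total s 2 with h | h
  · rw [f_of_le s h]
  · rw [← f_of_le 2 le_rfl]; exact f_mono h

lemma F_anti : AntitoneOn F (Set.Ioi 0) := by
  apply antitoneOn_of_deriv_nonpos (convex_Ioi 0)
  · intro x hx
    exact (F_contAt x hx).continuousWithinAt
  · intro x hx
    rw [interior_Ioi] at hx
    exact (F_deriv x hx).differentiableAt.differentiableWithinAt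
  · intro x hx
    rw [interior_Ioi] at hx
    rw [(F_deriv x hx).deriv]
    exact (dF_neg x hx).le

lemma f_le_F (s : ℝ) (hs : 0 < s) : f s ≤ F s := by
  have h := F_sub_f s
  have := r_pos s
  have : 0 < Rf (-1) s / s := by positivity
  linarith

lemma f_le_F' (x y : ℝ) (hy : 0 < y) : f x ≤ F y := by
  have h1 := f_mono (le_max_left x y)
  have h2 : 0 < max x y := lt_max_of_lt_right hy
  exact h1.trans ((f_le_F _ h2).trans (F_anti hy h2 (le_max_right x y)))

lemma mvt_f (x y : ℝ) (hx : 2 ≤ x) (hxy : x < y) : ∃ ξ, x < ξ ∧ ξ < y ∧ f y - f x = df ξ * (y - x) := by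
  obtain ⟨c, hc, h⟩ := exists_hasDerivAt_eq_slope f df hxy f_cont.continuousOn
    (fun z hz => f_deriv z (by linarith [hz.1]))
  refine ⟨c, hc.1, hc.2, ?_⟩
  rw [h]
  have : y - x ≠ 0 := by linarith
  field_simp

lemma mvt_F (x y : ℝ) (hx : 0 < x) (hxy : x < y) : ∃ ξ, x < ξ ∧ ξ < y ∧ F y - F x = dF ξ * (y - x) := by
  obtain ⟨c, hc, h⟩ := exists_hasDerivAt_eq_slope F dF hxy
    (fun z hz => (F_contAt z (by linarith [hz.1])).continuousWithinAt)
    (fun z hz => F_deriv z (by linarith [hz.1]))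
  refine ⟨c, hc.1, hc.2, ?_⟩
  rw [h]
  have : y - x ≠ 0 := by linarith
  field_simp

/-- decay bounds -/
lemma AB_decay (s : ℝ) (hs : 2 ≤ s) : (F s - f (s-1)) + (F (s-1) - f s) ≤ 2 * exp 22 * exp (-2*s) := by
  have h1 := F_sub_f s
  have h2 := F_sub_f (s-1)
  have h3 : Rf (-1) s / s ≤ Rf (-1) (s-1) := by
    refine (div_le_self (r_pos s).le (by linarith)).trans (r_anti (by linarith))
  have h4 : Rf (-1) (s-1) / (s-1) ≤ Rf (-1) (s-1) := div_le_self (r_pos _).le (by linarith)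
  have h5 := r_decay (s-1)
  have h6 : exp 20 * exp (-2*(s-1)) = exp 22 * exp (-2*s) := by
    rw [← exp_add, ← exp_add]; ring_nf
  linarith

lemma decay_dF : ∃ K : ℝ, 0 < K ∧ ∀ s, 1/2 ≤ s → -dF s ≤ K * exp (-2*s) := by
  refine ⟨4 * exp 22, by positivity, ?_⟩
  intro s hs
  have hs0 : 0 < s := by linarith
  have e : -dF s = (F s - f (s-1)) / s := by unfold dF; ring
  rw [e, div_le_iff₀ hs0]
  rcases le_total s 2 with h | h
  · rw [f_of_le (s-1) (by linarith), F_of_le s (by linarith)]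
    have h1 : 1 / s ≤ 2 := by rw [div_le_iff₀ hs0]; linarith
    have h2 : (1:ℝ) ≤ exp 22 * exp (-2*s) := by
      rw [← exp_add]; exact one_le_exp (by linarith)
    nlinarith
  · have := AB_decay s h
    have h2 := (AB_pos s h).2
    have h3 : 0 < exp 22 * exp (-2*s) := by positivity
    nlinarith

lemma decay_df : ∃ K : ℝ, 0 < K ∧ ∀ s, df s ≤ K * exp (-2*s) := by
  refine ⟨2 * exp 22, by positivity, ?_⟩
  intro s
  unfold df
  split_ifs with h
  · positivity
  · push Not at h
    rw [div_le_iff₀ (by linarith)]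
    have := AB_decay s h.le
    have h2 := (AB_pos s h.le).1
    have h3 : 0 < exp 22 * exp (-2*s) := by positivity
    nlinarith

lemma exp2_anti {x y : ℝ} (h : x ≤ y) : exp (-2*y) ≤ exp (-2*x) := exp_le_exp.mpr (by linarith)

lemma mexp {K x y d e : ℝ} (hK : 0 < K) (h : x ≤ y) (hd : 0 ≤ d) (hde : d ≤ e) :
    K * exp (-2*y) * d ≤ K * exp (-2*x) * e :=
  mul_le_mul (mul_le_mul_of_nonneg_left (exp2_anti h) hK.le) hde hd (by positivity)

lemma mexp1 {K x y : ℝ} (hK : 0 < K) (h : x ≤ y) :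
    K * exp (-2*y) ≤ K * exp (-2*x) := mul_le_mul_of_nonneg_left (exp2_anti h) hK.le

lemma lip_F : ∃ K : ℝ, 0 < K ∧ ∀ x y, 1/2 ≤ x → x ≤ y → F x - F y ≤ K * exp (-2*x) * (y - x) := by
  obtain ⟨K, hK, h⟩ := decay_dF
  refine ⟨K, hK, ?_⟩
  intro x y hx hxy
  rcases eq_or_lt_of_le hxy with e | hlt
  · rw [e]; simp
  · obtain ⟨ξ, h1, h2, h3⟩ := mvt_F x y (by linarith) hlt
    have h4 := h ξ (by linarith)
    have h5 : K * exp (-2*ξ) ≤ K * exp (-2*x) := mexp1 (by assumption) (by linarith)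
    nlinarith

lemma lip_f : ∃ K : ℝ, 0 < K ∧ ∀ x y, x ≤ y → f y - f x ≤ K * exp (-2*x) * (y - x) := by
  obtain ⟨K, hK, h⟩ := decay_df
  refine ⟨K, hK, ?_⟩
  have key : ∀ x y, 2 ≤ x → x ≤ y → f y - f x ≤ K * exp (-2*x) * (y - x) := by
    intro x y hx hxy
    rcases eq_or_lt_of_le hxy with e | hlt
    · rw [e]; simp
    · obtain ⟨ξ, h1, h2, h3⟩ := mvt_f x y (by linarith) hlt
      have h4 := h ξ
      have h5 : K * exp (-2*ξ) ≤ K * exp (-2*x) := mexp1 (by assumption) (by linarith)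
      nlinarith
  intro x y hxy
  rcases le_total 2 x with h2 | h2
  · exact key x y h2 hxy
  · rw [f_of_le x h2]
    rcases le_total y 2 with h3 | h3
    · rw [f_of_le y h3]
      have : 0 ≤ y - x := by linarith
      simp; positivity
    · have h4 := key 2 y le_rfl h3
      rw [f_of_le 2 le_rfl] at h4
      have h5 : K * exp (-2*2) * (y - 2) ≤ K * exp (-2*x) * (y - x) := mexp hK (by linarith) (by linarith) (by linarith)
      linarith

lemma lip_dF : ∃ K : ℝ, 0 < K ∧ ∀ x y, 1/2 ≤ x → x ≤ y → |dF x - dF y| ≤ K * exp (-2*x) * (y - x) := by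
  obtain ⟨K1, hK1, h1⟩ := lip_F
  obtain ⟨K2, hK2, h2⟩ := lip_f
  obtain ⟨K3, hK3, h3⟩ := decay_dF
  refine ⟨2 * (K2 * exp 2 + K1 + K3), by positivity, ?_⟩
  intro x y hx hxy
  have hx0 : 0 < x := by linarith
  have a1 := h1 x y hx hxy
  have a1' : F y ≤ F x := F_anti hx0 (lt_of_lt_of_le hx0 hxy) hxy
  have a2 := h2 (x-1) (y-1) (by linarith)
  have a2' : f (x-1) ≤ f (y-1) := f_mono (by linarith)
  have a3 := h3 y (by linarith)
  have a3' := dF_neg y (by linarith)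
  have e2 : exp (-2*(x-1)) = exp 2 * exp (-2*x) := by rw [← exp_add]; ring_nf
  have e3 : K3 * exp (-2*y) ≤ K3 * exp (-2*x) := mexp1 (by assumption) (by linarith)
  rw [e2] at a2
  have e : x * (dF x - dF y) = (f (x-1) - f (y-1)) - (F x - F y) + dF y * (y - x) := by
    unfold dF
    have : y ≠ 0 := by linarith
    field_simp
    ring
  have hD : 0 ≤ y - x := by linarith
  have b : |x * (dF x - dF y)| ≤ (K2 * exp 2 + K1 + K3) * exp (-2*x) * (y - x) := by
    rw [e, abs_le]
    constructor <;> nlinarith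
  rw [abs_mul, abs_of_pos hx0] at b
  have hB := abs_nonneg (dF x - dF y)
  nlinarith

lemma lip_df : ∃ K : ℝ, 0 < K ∧ ∀ x y, 2 < x → x ≤ y → |df x - df y| ≤ K * exp (-2*x) * (y - x) := by
  obtain ⟨K1, hK1, h1⟩ := lip_F
  obtain ⟨K2, hK2, h2⟩ := lip_f
  obtain ⟨K3, hK3, h3⟩ := decay_df
  refine ⟨2 * (K1 * exp 2 + K2 + K3), by positivity, ?_⟩
  intro x y hx hxy
  have hx0 : 0 < x := by linarith
  have a1 := h1 (x-1) (y-1) (by linarith) (by linarith)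
  have a1' : F (y-1) ≤ F (x-1) := F_anti (by simp; linarith) (by simp; linarith) (by linarith)
  have a2 := h2 x y hxy
  have a2' : f x ≤ f y := f_mono (by linarith)
  have a3 := h3 y
  have a3' := df_nonneg y
  have e2 : exp (-2*(x-1)) = exp 2 * exp (-2*x) := by rw [← exp_add]; ring_nf
  have e3 : K3 * exp (-2*y) ≤ K3 * exp (-2*x) := mexp1 (by assumption) (by linarith)
  rw [e2] at a1
  have e : x * (df x - df y) = (F (x-1) - F (y-1)) - (f x - f y) + df y * (y - x) := by
    unfold df
    rw [if_neg (by linarith), if_neg (by linarith)]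
    have : y ≠ 0 := by linarith
    field_simp
    ring
  have hD : 0 ≤ y - x := by linarith
  have b : |x * (df x - df y)| ≤ (K1 * exp 2 + K2 + K3) * exp (-2*x) * (y - x) := by
    rw [e, abs_le]
    constructor <;> nlinarith
  rw [abs_mul, abs_of_pos hx0] at b
  have hB := abs_nonneg (df x - df y)
  nlinarith

lemma taylor_F : ∃ K : ℝ, 0 < K ∧ ∀ x y, 1/2 ≤ x → 1/2 ≤ y →
    F x ≤ F y + dF y * (x - y) + K * exp (-2 * min x y) * (x - y)^2 := by
  obtain ⟨K, hK, h⟩ := lip_dF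
  refine ⟨K, hK, ?_⟩
  intro x y hx hy
  rcases lt_trichotomy x y with hlt | heq | hlt
  · obtain ⟨ξ, h1, h2, h3⟩ := mvt_F x y (by linarith) hlt
    have h4 := h ξ y (by linarith) h2.le
    rw [min_eq_left hlt.le]
    have h5 : K * exp (-2*ξ) * (y - ξ) ≤ K * exp (-2*x) * (y - x) := mexp hK (by linarith) (by linarith) (by linarith)
    have h6 := (abs_le.mp (h4.trans h5)).1
    nlinarith
  · rw [heq]; simp
  · obtain ⟨ξ, h1, h2, h3⟩ := mvt_F y x (by linarith) hlt
    have h4 := h y ξ (by linarith) h1.le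
    rw [min_eq_right hlt.le]
    have h5 : K * exp (-2*y) * (ξ - y) ≤ K * exp (-2*y) * (x - y) := by
      gcongr
    have h6 := (abs_le.mp (h4.trans h5)).1
    nlinarith

lemma taylor_f : ∃ K : ℝ, 0 < K ∧ ∀ x y,
    f y + df y * (x - y) - K * exp (-2 * min x y) * (x - y)^2 ≤ f x := by
  obtain ⟨K, hK, h⟩ := lip_df
  refine ⟨K, hK, ?_⟩
  have key : ∀ x y, 2 ≤ x → 2 < y → f y + df y * (x - y) - K * exp (-2 * min x y) * (x - y)^2 ≤ f x := by
    intro x y hx hy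
    rcases lt_trichotomy x y with hlt | heq | hlt
    · obtain ⟨ξ, h1, h2, h3⟩ := mvt_f x y (by linarith) hlt
      have h4 := h ξ y (by linarith) h2.le
      rw [min_eq_left hlt.le]
      have h5 : K * exp (-2*ξ) * (y - ξ) ≤ K * exp (-2*x) * (y - x) := mexp hK (by linarith) (by linarith) (by linarith)
      have h6 := (abs_le.mp (h4.trans h5)).2
      nlinarith
    · rw [heq]; simp
    · obtain ⟨ξ, h1, h2, h3⟩ := mvt_f y x (by linarith) hlt
      have h4 := h y ξ (by linarith) h1.le
      rw [min_eq_right hlt.le]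
      have h5 : K * exp (-2*y) * (ξ - y) ≤ K * exp (-2*y) * (x - y) := by
        gcongr
      have h6 := (abs_le.mp (h4.trans h5)).2
      nlinarith
  intro x y
  rcases le_or_gt y 2 with hy | hy
  · have e : df y = 0 := by unfold df; rw [if_pos hy]
    rw [e, f_of_le y hy]
    have := f_nonneg x
    have : 0 ≤ K * exp (-2 * min x y) * (x - y)^2 := by positivity
    linarith
  · rcases le_total 2 x with hx | hx
    · exact key x y hx hy
    · have h1 := key 2 y le_rfl hy
      rw [min_eq_left hy.le, f_of_le 2 le_rfl] at h1
      rw [min_eq_left (by linarith), f_of_le x hx]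
      have h2 := df_nonneg y
      have h3 : K * exp (-2*2) * (2-y)^2 ≤ K * exp (-2*x) * (x-y)^2 := by
        gcongr ?_ * ?_ * ?_
        · exact exp2_anti hx
        · nlinarith
      nlinarith

lemma lower_dF : ∃ m : ℝ, 0 < m ∧ ∀ r s, 1/8 ≤ r → r ≤ s → s ≤ 16 → F s + m * (s - r) ≤ F r := by
  have hcomp : IsCompact (Set.Icc (1/8:ℝ) 16) := isCompact_Icc
  have hcont : ContinuousOn (fun s => -dF s) (Set.Icc (1/8:ℝ) 16) := by
    unfold dF
    apply ContinuousOn.neg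
    apply ContinuousOn.div
    · apply ContinuousOn.sub
      · exact (f_cont.comp (by fun_prop)).continuousOn
      · intro x hx
        exact (F_contAt x (by linarith [hx.1])).continuousWithinAt
    · fun_prop
    · intro x hx
      have := hx.1
      intro h
      linarith
  obtain ⟨x, hx, hmin⟩ := hcomp.exists_isMinOn ⟨1, by norm_num⟩ hcont
  refine ⟨-dF x, by linarith [dF_neg x (by linarith [hx.1])], ?_⟩
  intro r s hr hrs hs
  rcases eq_or_lt_of_le hrs with e | hlt
  · rw [e]; simp
  · obtain ⟨ξ, h1, h2, h3⟩ := mvt_F r s (by linarith) hlt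
    have h4 : -dF x ≤ -dF ξ := hmin ⟨by linarith, by linarith⟩
    nlinarith

lemma lower_df : ∃ m : ℝ, 0 < m ∧ ∀ r s, 2 ≤ r → r ≤ s → s ≤ 16 → f r + m * (s - r) ≤ f s := by
  have hcomp : IsCompact (Set.Icc (2:ℝ) 16) := isCompact_Icc
  have hcont : ContinuousOn (fun s => (F (s-1) - f s)/s) (Set.Icc (2:ℝ) 16) := by
    apply ContinuousOn.div
    · apply ContinuousOn.sub
      · exact F_contOn_shift.mono (fun x hx => hx.1)
      · exact f_cont.continuousOn
    · fun_prop
    · intro x hx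
      have := hx.1
      intro h
      linarith
  obtain ⟨x, hx, hmin⟩ := hcomp.exists_isMinOn ⟨3, by norm_num⟩ hcont
  refine ⟨(F (x-1) - f x)/x, div_pos (AB_pos x hx.1).2 (by linarith [hx.1]), ?_⟩
  intro r s hr hrs hs
  rcases eq_or_lt_of_le hrs with e | hlt
  · rw [e]; simp
  · obtain ⟨ξ, h1, h2, h3⟩ := mvt_f r s hr hlt
    have h4 : (F (x-1) - f x)/x ≤ (F (ξ-1) - f ξ)/ξ := hmin ⟨by linarith, by linarith⟩
    have h5 : df ξ = (F (ξ-1) - f ξ)/ξ := by unfold df; rw [if_neg (by linarith)]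
    rw [← h5] at h4
    nlinarith

lemma exists_ell : ∃ l : ℝ, 0 < l ∧ ∀ s, f s ≤ l ∧ (0 < s → l ≤ F s) := by
  have hb : BddAbove (Set.range f) := ⟨F 1, by rintro _ ⟨x, rfl⟩; exact f_le_F' x 1 one_pos⟩
  refine ⟨sSup (Set.range f), ?_, ?_⟩
  · obtain ⟨m, hm, h⟩ := lower_df
    have h1 := h 2 3 le_rfl (by norm_num) (by norm_num)
    rw [f_of_le 2 le_rfl] at h1
    have h2 : f 3 ≤ sSup (Set.range f) := le_csSup hb ⟨3, rfl⟩
    linarith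
  · intro s
    refine ⟨le_csSup hb ⟨s, rfl⟩, fun hs => csSup_le ⟨f 0, 0, rfl⟩ ?_⟩
    rintro _ ⟨x, rfl⟩
    exact f_le_F' x s hs

lemma aF_ineq (r s : ℝ) (hrs : r ≤ s) : aF s - aF r ≤ (s - r) * f (s - 1) := by
  rcases eq_or_lt_of_le hrs with e | hlt
  · rw [e]; simp
  · obtain ⟨c, hc, h⟩ := exists_hasDerivAt_eq_slope aF (fun s => f (s-1)) hlt aF_cont.continuousOn
      (fun z hz => aF_deriv z)
    have h1 : f (c-1) ≤ f (s-1) := f_mono (by linarith [hc.2])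
    have h0 : 0 < s - r := by linarith
    rw [h, div_le_iff₀ h0] at h1
    linarith

lemma bF_ineq (r s : ℝ) (hr : 2 ≤ r) (hrs : r ≤ s) : (s - r) * F (s - 1) ≤ bF s - bF r := by
  rcases eq_or_lt_of_le hrs with e | hlt
  · rw [e]; simp
  · obtain ⟨c, hc, h⟩ := exists_hasDerivAt_eq_slope bF (fun s => F (s-1)) hlt bF_cont.continuousOn
      (fun z hz => bF_deriv z (by linarith [hz.1]))
    have h1 : F (s-1) ≤ F (c-1) := F_anti (by simp; linarith [hc.1]) (by simp; linarith) (by linarith [hc.2])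
    have h0 : 0 < s - r := by linarith
    rw [h, le_div_iff₀ h0] at h1
    linarith

end LSieve

open Real

namespace LSieve

structure Good (Φ Ψ H : ℝ → ℝ) (d K m0 : ℝ) : Prop where
  hα : ∀ r s, d ≤ r → r ≤ s → s * Φ s + (s - r) * Ψ (s - 1) ≤ r * Φ r
  anti : ∀ r s, d ≤ r → r ≤ s → Φ s ≤ Φ r
  low : ∀ r s, d ≤ r → r ≤ s → s ≤ 16 → Φ s + m0 * (s - r) ≤ Φ r
  tay : ∀ s δ, d ≤ s → |δ| ≤ 1/4 → Ψ (s - 1 + δ) ≤ Ψ (s - 1) - H s * δ + K * exp (-s) * δ^2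
  H0 : ∀ s, d ≤ s → 0 ≤ H s
  HK : ∀ s, d ≤ s → H s ≤ K * exp (-s)
  HL : ∀ r s, d ≤ r → r ≤ s → H r - H s ≤ K * exp (-r) * ((s - r) / s)

lemma Good.mono {Φ Ψ H : ℝ → ℝ} {d K m0 K' m0' : ℝ} (h : Good Φ Ψ H d K m0) (hd : 0 < d)
    (hK : K ≤ K') (hm : m0' ≤ m0) : Good Φ Ψ H d K' m0' where
  hα := h.hα
  anti := h.anti
  low := fun r s h1 h2 h3 => by
    have := h.low r s h1 h2 h3
    have : m0' * (s - r) ≤ m0 * (s - r) := mul_le_mul_of_nonneg_right hm (by linarith)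
    linarith
  tay := fun s δ h1 h2 => by
    have := h.tay s δ h1 h2
    have : K * exp (-s) * δ^2 ≤ K' * exp (-s) * δ^2 := by gcongr
    linarith
  H0 := h.H0
  HK := fun s h1 => by
    have := h.HK s h1
    have : K * exp (-s) ≤ K' * exp (-s) := by gcongr
    linarith
  HL := fun r s h1 h2 => by
    have := h.HL r s h1 h2
    have h3 : 0 ≤ (s - r) / s := div_nonneg (by linarith) (by linarith)
    have : K * exp (-r) * ((s - r) / s) ≤ K' * exp (-r) * ((s - r) / s) := by gcongr
    linarith

/-- converting Lipschitz bounds -/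
lemma HL_aux {H : ℝ → ℝ} {d K1 K2 : ℝ} (hd : 0 < d) (hK1 : 0 < K1) (hK2 : 0 < K2)
    (h0 : ∀ s, d ≤ s → 0 ≤ H s)
    (h1 : ∀ s, d ≤ s → H s ≤ K1 * exp (-2*s))
    (h2 : ∀ r s, d ≤ r → r ≤ s → H r - H s ≤ K2 * exp (-2*r) * (s - r)) (r s : ℝ)
    (hr : d ≤ r) (hrs : r ≤ s) :
    H r - H s ≤ (2 * K1 + K2) * exp (-r) * ((s - r) / s) := by
  have hs0 : 0 < s := by linarith
  have hr0 : 0 < r := by linarith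
  have e1 : exp (-2*r) = exp (-r) * exp (-r) := by rw [← exp_add]; ring_nf
  have e2 : exp (-r) ≤ 1 := exp_le_one_iff.mpr (by linarith)
  have e3 := exp_pos (-r)
  have hq : 0 ≤ (s - r) / s := div_nonneg (by linarith) hs0.le
  rcases le_total s (2 * (s - r)) with h | h
  · have h3 : 1/2 ≤ (s - r)/s := by rw [le_div_iff₀ hs0]; linarith
    have h4 := h1 r hr
    have h5 := h0 s (hr.trans hrs)
    have h6 : K1 * exp (-2*r) ≤ K1 * exp (-r) := by
      rw [e1]
      have : exp (-r) * exp (-r) ≤ exp (-r) := by nlinarith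
      exact mul_le_mul_of_nonneg_left this hK1.le
    have h7 : K1 * exp (-r) * 1 ≤ K1 * exp (-r) * (2 * ((s-r)/s)) := by
      apply mul_le_mul_of_nonneg_left _ (by positivity); linarith
    have h8 : 0 ≤ K2 * exp (-r) * ((s-r)/s) := by positivity
    linarith
  · have h3 := h2 r s hr hrs
    have h4 : exp (-r) * s ≤ 1 := by
      have h5 : s ≤ exp r := by
        have h6 : s ≤ 2 * r := by linarith
        have h7 := Real.add_one_le_exp (r/2)
        have h8 : exp r = exp (r/2) * exp (r/2) := by rw [← exp_add]; ring_nf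
        have h9 : 0 < r/2 := by linarith
        rw [h8]
        nlinarith [sq_nonneg (r/2 - 1)]
      have h6 : exp (-r) * exp r = 1 := by rw [← exp_add]; simp
      nlinarith
    have h5 : K2 * exp (-2*r) * (s - r) = K2 * exp (-r) * ((s-r)/s) * (exp (-r) * s) := by
      rw [e1]; field_simp
    have h8 : 0 ≤ K2 * exp (-r) * ((s-r)/s) := by positivity
    have h9 : 0 ≤ K1 * exp (-r) * ((s-r)/s) := by positivity
    rw [h5] at h3
    nlinarith

lemma exp_two_le (s : ℝ) (hs : 0 ≤ s) : exp (-2*s) ≤ exp (-s) := exp_le_exp.mpr (by linarith)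

lemma good_F : ∃ K m0, 0 < K ∧ 0 < m0 ∧ Good F (fun s => - f s) (fun s => df (s - 1)) (1/8) K m0 := by
  obtain ⟨m0, hm0, hlow⟩ := lower_dF
  obtain ⟨K1, hK1, h1⟩ := decay_df
  obtain ⟨K2, hK2, h2⟩ := lip_df
  obtain ⟨K3, hK3, h3⟩ := taylor_f
  have e2 : ∀ s : ℝ, exp (-2*(s-1)) = exp 2 * exp (-2*s) := fun s => by rw [← exp_add]; ring_nf
  have g1 : ∀ s, 1/8 ≤ s → df (s-1) ≤ (K1 * exp 2) * exp (-2*s) := fun s _ => by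
    have := h1 (s-1); rw [e2] at this; linarith
  have g2 : ∀ r s, 1/8 ≤ r → r ≤ s → df (r-1) - df (s-1) ≤ (K2 * exp 2) * exp (-2*r) * (s - r) := by
    intro r s hr hrs
    rcases le_or_gt (r-1) 2 with h | h
    · have : df (r-1) = 0 := by unfold df; rw [if_pos h]
      rw [this]
      have := df_nonneg (s-1)
      have h4 : 0 ≤ s - r := by linarith
      have : 0 ≤ (K2 * exp 2) * exp (-2*r) * (s - r) := by positivity
      linarith
    · have := (abs_le.mp (h2 (r-1) (s-1) h (by linarith))).2
      rw [e2] at this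
      linarith
  have gHL := HL_aux (H := fun s => df (s-1)) (by norm_num : (0:ℝ) < 1/8)
    (by positivity : 0 < K1 * exp 2) (by positivity : 0 < K2 * exp 2) (fun s _ => df_nonneg _) g1 g2
  have hk1 : 0 < K1 * exp 2 := by positivity
  have hk2 : 0 < K2 * exp 2 := by positivity
  have hk3 : 0 < K3 * exp 3 := by positivity
  refine ⟨2 * (K1 * exp 2) + K2 * exp 2 + K3 * exp 3, m0, by positivity, hm0, ?_⟩
  constructor
  · intro r s hr hrs
    have h := aF_ineq r s hrs
    have hr0 : r ≠ 0 := by linarith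
    have hs0 : s ≠ 0 := by linarith
    have e1 : s * F s = aF s := by unfold F; field_simp
    have e2 : r * F r = aF r := by unfold F; field_simp
    rw [e1, e2]; linarith
  · intro r s hr hrs
    exact F_anti (by simp; linarith) (by simp; linarith) hrs
  · exact hlow
  · intro s δ hs hδ
    have h := h3 (s - 1 + δ) (s - 1)
    have hm : s - 5/4 ≤ min (s - 1 + δ) (s-1) := by
      have := (abs_le.mp hδ).1
      apply le_min <;> linarith
    have h4 : exp (-2 * min (s-1+δ) (s-1)) ≤ exp 3 * exp (-s) := by
      rw [← exp_add]
      apply exp_le_exp.mpr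
      linarith
    have h5 : K3 * exp (-2 * min (s-1+δ) (s-1)) * δ^2 ≤ K3 * (exp 3 * exp (-s)) * δ^2 := by gcongr
    have h6 : (s - 1 + δ - (s - 1)) = δ := by ring
    rw [h6] at h
    have h7 : 0 ≤ (2 * (K1 * exp 2) + K2 * exp 2) * (exp (-s) * δ^2) := by positivity
    linarith
  · intro s _; exact df_nonneg _
  · intro s hs
    have := g1 s hs
    have h4 := exp_two_le s (by linarith)
    have h5 : (K1 * exp 2) * exp (-2*s) ≤ (K1 * exp 2) * exp (-s) := by gcongr
    have h6 : 0 ≤ (K1 * exp 2 + K2 * exp 2 + K3 * exp 3) * exp (-s) := by positivity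
    linarith
  · intro r s hr hrs
    have := gHL r s hr hrs
    have h3 : 0 ≤ (s - r) / s := div_nonneg (by linarith) (by linarith)
    have h6 : 0 ≤ (K3 * exp 3) * exp (-r) * ((s-r)/s) := by positivity
    linarith

lemma good_f : ∃ K m0, 0 < K ∧ 0 < m0 ∧ Good (fun s => - f s) F (fun s => - dF (s - 1)) 2 K m0 := by
  obtain ⟨m0, hm0, hlow⟩ := lower_df
  obtain ⟨K1, hK1, h1⟩ := decay_dF
  obtain ⟨K2, hK2, h2⟩ := lip_dF
  obtain ⟨K3, hK3, h3⟩ := taylor_F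
  have e2 : ∀ s : ℝ, exp (-2*(s-1)) = exp 2 * exp (-2*s) := fun s => by rw [← exp_add]; ring_nf
  have g1 : ∀ s, 2 ≤ s → - dF (s-1) ≤ (K1 * exp 2) * exp (-2*s) := fun s hs => by
    have := h1 (s-1) (by linarith); rw [e2] at this; linarith
  have g2 : ∀ r s, 2 ≤ r → r ≤ s → - dF (r-1) - - dF (s-1) ≤ (K2 * exp 2) * exp (-2*r) * (s - r) := by
    intro r s hr hrs
    have := (abs_le.mp (h2 (r-1) (s-1) (by linarith) (by linarith))).1
    rw [e2] at this
    linarith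
  have g0 : ∀ s, 2 ≤ s → 0 ≤ - dF (s-1) := fun s hs => by
    linarith [dF_neg (s-1) (by linarith)]
  have gHL := HL_aux (H := fun s => - dF (s-1)) (by norm_num : (0:ℝ) < 2)
    (by positivity : 0 < K1 * exp 2) (by positivity : 0 < K2 * exp 2) g0 g1 g2
  have hk1 : 0 < K1 * exp 2 := by positivity
  have hk2 : 0 < K2 * exp 2 := by positivity
  have hk3 : 0 < K3 * exp 3 := by positivity
  refine ⟨2 * (K1 * exp 2) + K2 * exp 2 + K3 * exp 3, m0, by positivity, hm0, ?_⟩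
  constructor
  · intro r s hr hrs
    have h := bF_ineq r s hr hrs
    have hr0 : r ≠ 0 := by linarith
    have hs0 : s ≠ 0 := by linarith
    have e1 : s * f s = bF s := by unfold f; field_simp
    have e2 : r * f r = bF r := by unfold f; field_simp
    linarith
  · intro r s hr hrs
    have := f_mono hrs
    linarith
  · intro r s h1 h2 h3
    have := hlow r s h1 h2 h3
    linarith
  · intro s δ hs hδ
    have hδ' := abs_le.mp hδ
    have h := h3 (s - 1 + δ) (s - 1) (by linarith) (by linarith)
    have hm : s - 5/4 ≤ min (s - 1 + δ) (s-1) := by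
      apply le_min <;> linarith
    have h4 : exp (-2 * min (s-1+δ) (s-1)) ≤ exp 3 * exp (-s) := by
      rw [← exp_add]
      apply exp_le_exp.mpr
      linarith
    have h5 : K3 * exp (-2 * min (s-1+δ) (s-1)) * δ^2 ≤ K3 * (exp 3 * exp (-s)) * δ^2 := by gcongr
    have h6 : (s - 1 + δ - (s - 1)) = δ := by ring
    rw [h6] at h
    have h7 : 0 ≤ (2 * (K1 * exp 2) + K2 * exp 2) * (exp (-s) * δ^2) := by positivity
    linarith
  · exact g0
  · intro s hs
    have := g1 s hs
    have h4 := exp_two_le s (by linarith)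
    have h5 : (K1 * exp 2) * exp (-2*s) ≤ (K1 * exp 2) * exp (-s) := by gcongr
    have h6 : 0 ≤ (K1 * exp 2 + K2 * exp 2 + K3 * exp 3) * exp (-s) := by positivity
    linarith
  · intro r s hr hrs
    have := gHL r s hr hrs
    have h3 : 0 ≤ (s - r) / s := div_nonneg (by linarith) (by linarith)
    have h6 : 0 ≤ (K3 * exp 3) * exp (-r) * ((s-r)/s) := by positivity
    linarith

/-- the exponential term -/
lemma exp_term (s sp δ p : ℝ) (hp : 100 ≤ p) (hs : 0 ≤ s) (hsp : s - sp ≥ s / p) (hsp0 : 0 ≤ sp)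
    (hδ : |δ| ≤ 1/4) :
    (16 ≤ s → exp (-sp) / p ≤ (1 - 1/p)^3 * exp (-sp) - exp (-s) - exp (-(s - 1 + δ)) / p) ∧
    (- 7 / p ≤ (1 - 1/p)^3 * exp (-sp) - exp (-s) - exp (-(s - 1 + δ)) / p) := by
  have hp0 : 0 < p := by linarith
  set x := s / p with hx
  have hx0 : 0 ≤ x := by positivity
  set q := 1 / p with hq
  have hq0 : 0 < q := by positivity
  have hq1 : q ≤ 1/100 := by rw [hq, div_le_div_iff₀ hp0 (by norm_num)]; linarith
  set E := exp (-sp) with hE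
  have hE0 : 0 < E := exp_pos _
  have hE1 : E ≤ 1 := exp_le_one_iff.mpr (by linarith)
  have h1 : exp (-(s - 1 + δ)) ≤ 4 * exp (-s) := by
    have e : exp (-(s - 1 + δ)) = exp (1 - δ) * exp (-s) := by rw [← exp_add]; ring_nf
    rw [e]
    gcongr
    have h2 : exp (1 - δ) ≤ exp 1 * exp (1/4) := by
      rw [← exp_add]; apply exp_le_exp.mpr; linarith [(abs_le.mp hδ).1]
    have h3 : exp (1/4 : ℝ) ≤ 4/3 := by
      have := Real.one_sub_le_exp_neg (1/4 : ℝ)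
      rw [exp_neg] at this
      have h5 := exp_pos (1/4:ℝ)
      have h6 : (exp (1/4:ℝ))⁻¹ * exp (1/4:ℝ) = 1 := inv_mul_cancel₀ h5.ne'
      nlinarith
    have h4 := exp_one_lt_d9
    nlinarith [exp_pos (1/4:ℝ), exp_pos (1:ℝ)]
  have h2 : exp (-s) ≤ E * (1 / (1 + x)) := by
    have e : exp (-s) ≤ E * exp (-x) := by
      rw [hE, ← exp_add]; apply exp_le_exp.mpr; linarith
    have h3 : exp (-x) ≤ 1 / (1 + x) := by
      rw [exp_neg, ← one_div]
      apply one_div_le_one_div_of_le (by linarith)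
      linarith [add_one_le_exp x]
    exact e.trans (mul_le_mul_of_nonneg_left h3 hE0.le)
  have h3 : 1 - 3 * q ≤ (1 - q)^3 := by
    have : 0 ≤ q^2 * (3 - q) := by
      have : 0 ≤ 3 - q := by linarith
      positivity
    nlinarith
  have h4 : exp (-(s - 1 + δ)) / p ≤ 4 * q * exp (-s) := by
    rw [div_eq_mul_one_div, ← hq]; nlinarith
  have h5 : (1 - 3*q) * E - (1 + 4*q) * (E * (1/(1+x))) ≤
      (1 - q)^3 * E - exp (-s) - exp (-(s - 1 + δ)) / p := by
    have : (1 - 3*q) * E ≤ (1-q)^3 * E := by gcongr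
    have : (1 + 4*q) * exp (-s) ≤ (1 + 4*q) * (E * (1/(1+x))) := by gcongr
    linarith
  have h6 : (1 - 3*q) * E - (1 + 4*q) * (E * (1/(1+x))) = E * (1 - 3*q - (1+4*q) * (1/(1+x))) := by ring
  rw [h6] at h5
  have eE : E / p = E * q := by rw [hq]; ring
  have e7 : -7 / p = -7 * q := by rw [hq]; ring
  rw [eE, e7]
  constructor
  · intro h16
    refine le_trans ?_ h5
    apply mul_le_mul_of_nonneg_left _ hE0.le
    have hx16 : 16 * q ≤ x := by
      rw [hx, hq, div_eq_mul_one_div s p]; gcongr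
    rw [le_sub_iff_add_le, ← le_sub_iff_add_le']
    rw [mul_one_div, div_le_iff₀ (by linarith)]
    nlinarith
  · refine le_trans ?_ h5
    have h8 : 1/(1+x) ≤ 1 := by rw [div_le_one (by linarith)]; linarith
    have h9 : -7 * q ≤ 1 - 3 * q - (1 + 4 * q) * (1 / (1 + x)) := by
      have : (1 + 4 * q) * (1 / (1 + x)) ≤ (1 + 4 * q) * 1 := by gcongr
      linarith
    have h10 := mul_le_mul_of_nonneg_left h9 hE0.le
    nlinarith

set_option maxHeartbeats 1000000 in
lemma step {Φ Ψ H : ℝ → ℝ} {d K m0 : ℝ} (g : Good Φ Ψ H d K m0) (hd : 1/8 ≤ d) (hK : 0 < K)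
    (hm0 : 0 < m0) (ℒ v p C0 C1 B M M' C β β' : ℝ) (hp : 100 ≤ p) (hv : 0 < v)
    (hC : |C| ≤ C0) (hCv : C0 * v ≤ 1/4) (hβ : 0 ≤ β) (hβ' : 0 ≤ β') (hβB : β' ≤ B)
    (hΔ : |β' - β - C / (v * p)| ≤ C1 / p) (hM : 0 < M) (hM' : m0 * M' = 32 * M)
    (hKM : K * (C0^2 + C1 + B * (1 + 8 * M' * v^2)) ≤ M) (hL : 0 < ℒ)
    (hs : d ≤ (ℒ - M' * v / p) * (v * (1 - 1/p))) :
    v * Φ (ℒ * v) - β * v^3 * H (ℒ * v) + M * v^3 * exp (-(ℒ * v))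
      + (v * Ψ (ℒ * v - 1 + C * v) + M * v^3 * exp (-(ℒ * v - 1 + C * v))) / p
    ≤ (v * (1 - 1/p)) * Φ ((ℒ - M' * v / p) * (v * (1 - 1/p)))
      - β' * (v * (1 - 1/p))^3 * H ((ℒ - M' * v / p) * (v * (1 - 1/p)))
      + M * (v * (1 - 1/p))^3 * exp (-((ℒ - M' * v / p) * (v * (1 - 1/p)))) := by
  have hp0 : 0 < p := by linarith
  have hM'0 : 0 < M' := by
    by_contra h
    push Not at h
    nlinarith
  set q := 1 / p with hq
  have hq0 : 0 < q := by positivity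
  have hq1 : q ≤ 1/100 := by rw [hq, div_le_div_iff₀ hp0 (by norm_num)]; linarith
  set s := ℒ * v with hsdef
  set w := v * (1 - q) with hw
  have hw0 : 0 < w := mul_pos hv (by linarith)
  have hwv : w ≤ v := by rw [hw]; nlinarith
  set Δ := M' * v / p with hΔdef
  have hΔ0 : 0 < Δ := by positivity
  have hΔq : Δ = M' * v * q := by rw [hΔdef, hq]; ring
  set sp := (ℒ - Δ) * w with hspdef
  set r := ℒ * w with hr
  have hrs : r = s * (1 - q) := by rw [hr, hsdef, hw]; ring
  have hs0 : 0 < s := by positivity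
  have hspr : sp ≤ r := by rw [hspdef, hr]; nlinarith
  have hrles : r ≤ s := by rw [hrs]; nlinarith
  have hsps : sp ≤ s := hspr.trans hrles
  have hds : d ≤ s := hs.trans hsps
  have hsm : s - sp = s * q + Δ * w := by rw [hspdef, hsdef, hw]; ring
  have hδ : |C * v| ≤ 1/4 := by
    rw [abs_mul, abs_of_pos hv]; nlinarith
  -- exponential term
  obtain ⟨x1, x2⟩ := exp_term s sp (C * v) p hp hs0.le
    (by rw [hsm, div_eq_mul_one_div, ← hq]; nlinarith [mul_pos hΔ0 hw0]) (by linarith) hδ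
  rw [← hq] at x1 x2
  -- main term
  have m1 : v * Φ s + v * q * Ψ (s - 1) ≤ w * Φ r := by
    have h := g.hα r s (hs.trans hspr) hrles
    have e1 : s * Φ s + (s - r) * Ψ (s-1) = ℒ * (v * Φ s + v * q * Ψ (s-1)) := by
      rw [hrs, hsdef]; ring
    have e2 : r * Φ r = ℒ * (w * Φ r) := by rw [hr]; ring
    rw [e1, e2] at h
    exact le_of_mul_le_mul_left h hL
  have m2 := g.tay s (C * v) hds hδ
  have m3 := g.anti sp r hs hspr
  have hH0 := g.H0 s hds
  have hH0' := g.H0 sp hs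
  have hHK := g.HK s hds
  set E := exp (-sp) with hE
  have hE0 : 0 < E := exp_pos _
  have hE1 : E ≤ 1 := exp_le_one_iff.mpr (by linarith)
  have hEs : exp (-s) ≤ E := exp_le_exp.mpr (by linarith)
  have m4 : H sp - H s ≤ K * E * (q * (1 + 8 * M' * v^2)) := by
    refine (g.HL sp s hs hsps).trans ?_
    apply mul_le_mul_of_nonneg_left _ (by positivity)
    rw [div_le_iff₀ hs0, hsm, hΔq]
    have h8 : 1 ≤ 8 * s := by linarith
    have h9 : M' * v * q * w ≤ M' * v * q * v := by gcongr
    have h10 : M' * v * q * v * 1 ≤ M' * v * q * v * (8 * s) := by gcongr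
    have e : q * (1 + 8 * M' * v^2) * s = s * q + M' * v * q * v * (8 * s) := by ring
    rw [e]
    linarith
  have hB0 : 0 ≤ B := hβ'.trans hβB
  -- Ψ term
  have p1 : v * q * Ψ (s - 1 + C * v) ≤ v * q * Ψ (s-1) - v^2 * q * C * H s + v^3 * q * (K * E * C0^2) := by
    have h1 : K * exp (-s) * (C*v)^2 ≤ K * E * (C0 * v)^2 := by
      have : (C*v)^2 ≤ (C0*v)^2 := by
        rw [mul_pow, mul_pow]
        have : C^2 ≤ C0^2 := sq_le_sq' (by linarith [(abs_le.mp hC).1]) (abs_le.mp hC).2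
        gcongr
      gcongr
    have h2 : v * q * Ψ (s - 1 + C*v) ≤ v * q * (Ψ (s-1) - H s * (C*v) + K * E * (C0*v)^2) := by
      apply mul_le_mul_of_nonneg_left _ (by positivity)
      linarith
    calc _ ≤ _ := h2
      _ = _ := by ring
  -- W term
  have hw3 : w^3 ≤ v^3 := by gcongr
  have p2 : β' * w^3 * H sp ≤ β * v^3 * H s + v^2 * q * C * H s + v^3 * q * (K * E * (C1 + B * (1 + 8 * M' * v^2))) := by
    have a1 : β' * w^3 * H sp ≤ β' * v^3 * H sp := by gcongr
    have a2 : β' * (H sp - H s) ≤ B * (K * E * (q * (1 + 8 * M' * v^2))) := by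
      have z1 : 0 ≤ K * E * (q * (1 + 8 * M' * v^2)) := by positivity
      calc β' * (H sp - H s) ≤ β' * (K * E * (q * (1 + 8 * M' * v^2))) := by gcongr
        _ ≤ _ := by gcongr
    have a3 : (β' - β) * H s ≤ (C / (v * p) + C1 / p) * H s := by
      apply mul_le_mul_of_nonneg_right _ hH0
      linarith [(abs_le.mp hΔ).2]
    have hC1 : 0 ≤ C1 := by
      have := (abs_nonneg _).trans hΔ
      by_contra h
      push Not at h
      have := div_neg_of_neg_of_pos h hp0
      linarith
    have a4 : C1 * q * H s ≤ C1 * q * (K * E) := by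
      apply mul_le_mul_of_nonneg_left _ (by positivity)
      exact hHK.trans (by gcongr)
    have e4 : (C / (v * p) + C1 / p) * H s = (C * q / v) * H s + C1 * q * H s := by
      rw [hq]; field_simp
    rw [e4] at a3
    have a5 : v^3 * (β' * H sp) ≤ v^3 * (β * H s + (C * q / v) * H s + C1 * q * (K * E) + B * (K * E * (q * (1 + 8 * M' * v^2)))) := by
      apply mul_le_mul_of_nonneg_left _ (by positivity)
      linarith
    have e5 : v^3 * (β * H s + (C * q / v) * H s + C1 * q * (K * E) + B * (K * E * (q * (1 + 8 * M' * v^2))))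
      = β * v^3 * H s + v^2 * q * C * H s + v^3 * q * (K * E * (C1 + B * (1 + 8 * M' * v^2))) := by
      field_simp
      try ring
    rw [e5] at a5
    linarith
  have p3 : v^3 * q * (K * E * C0^2) + v^3 * q * (K * E * (C1 + B * (1 + 8 * M' * v^2))) ≤ v^3 * q * (E * M) := by
    have : v^3 * q * (K * E * C0^2) + v^3 * q * (K * E * (C1 + B * (1 + 8 * M' * v^2)))
      = v^3 * q * (E * (K * (C0^2 + C1 + B * (1 + 8 * M' * v^2)))) := by ring
    rw [this]
    gcongr
  have eM : M * w^3 * E = M * v^3 * ((1-q)^3 * E) := by rw [hw]; ring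
  have hMv : 0 < M * v^3 := by positivity
  have eD : (v * Ψ (s - 1 + C * v) + M * v^3 * exp (-(s - 1 + C * v))) / p
      = v * q * Ψ (s - 1 + C * v) + M * v^3 * (exp (-(s - 1 + C * v)) / p) := by
    rw [hq]; field_simp
  rw [eD, eM]
  rcases le_total 16 s with h16 | h16
  · have y1 := mul_le_mul_of_nonneg_left (x1 h16) hMv.le
    have e6 : M * v^3 * (E / p) = v^3 * q * (E * M) := by rw [hq]; ring
    have m5 : w * Φ r ≤ w * Φ sp := by gcongr
    rw [e6] at y1
    linarith
  · have y1 := mul_le_mul_of_nonneg_left x2 hMv.le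
    have m5 := g.low sp r hs hspr (hrles.trans h16)
    have m6 : w * Φ r + w * (m0 * (r - sp)) ≤ w * Φ sp := by
      rw [← mul_add]
      exact mul_le_mul_of_nonneg_left m5 hw0.le
    have e7 : r - sp = Δ * w := by rw [hr, hspdef]; ring
    rw [e7, hΔq] at m6
    have e8 : w * (m0 * (M' * v * q * w)) = 32 * M * v^3 * q * (1-q)^2 := by
      rw [hw, ← hM']; ring
    rw [e8] at m6
    have e9 : M * v^3 * (-7 / p) = -7 * (M * v^3 * q) := by rw [hq]; ring
    rw [e9] at y1
    have h1 : (1:ℝ)/4 ≤ (1-q)^2 := by nlinarith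
    have h2 : 32 * M * v^3 * q * (1/4) ≤ 32 * M * v^3 * q * (1-q)^2 :=
      mul_le_mul_of_nonneg_left h1 (by positivity)
    have h3 : v^3 * q * (E * M) ≤ v^3 * q * (1 * M) := by gcongr
    linarith

end LSieve

open Real
namespace LSieve
open Finset
open ArithmeticFunction hiding log

local notation "Lam" => ArithmeticFunction.vonMangoldt

lemma psi_sum_le (N : ℕ) : ∑ d ∈ Ioc 0 N, Lam d ≤ (log 4 + 4) * N := by
  have h := Chebyshev.psi_le_const_mul_self (x := (N:ℝ)) (by positivity)
  rw [Chebyshev.psi] at h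
  simpa using h

lemma sumlog_lower (N : ℕ) : (N:ℝ) * log N - N ≤ ∑ n ∈ Ioc 0 N, log n := by
  induction N with
  | zero => simp
  | succ N ih =>
    rw [← Finset.insert_Ioc_right_eq_Ioc_add_one (by omega), sum_insert (by simp)]
    rcases Nat.eq_zero_or_pos N with h | h
    · subst h; simp
    have hN : (0:ℝ) < N := by exact_mod_cast h
    have : log ((N+1:ℕ):ℝ) - log N ≤ 1 / N := by
      rw [← Real.log_div (by positivity) (by positivity)]
      refine (Real.log_le_sub_one_of_pos (by positivity)).trans ?_
      push_cast; apply le_of_eq; field_simp; ring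
    have h2 : (N:ℝ) * (log ((N+1:ℕ):ℝ) - log N) ≤ 1 := by
      calc _ ≤ (N:ℝ) * (1/N) := by gcongr
        _ = 1 := by field_simp
    push_cast at *
    nlinarith

lemma sumlog_upper (N : ℕ) : ∑ n ∈ Ioc 0 N, log (n:ℝ) ≤ (N:ℝ) * log N := by
  calc ∑ n ∈ Ioc 0 N, log (n:ℝ) ≤ ∑ n ∈ Ioc 0 N, log (N:ℝ) := by
        apply sum_le_sum; intro n hn
        simp only [mem_Ioc] at hn
        exact Real.log_le_log (by exact_mod_cast hn.1) (by exact_mod_cast hn.2)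
    _ = _ := by simp

noncomputable def AL (N : ℕ) : ℝ := ∑ d ∈ Ioc 0 N, Lam d / d
noncomputable def QL (N : ℕ) : ℝ := ∑ d ∈ Ioc 0 N, Lam d / d * log d

lemma sumlog_eq (N : ℕ) : ∑ n ∈ Ioc 0 N, log (n:ℝ) = ∑ d ∈ Ioc 0 N, Lam d * ((N / d : ℕ):ℝ) := by
  rw [← sum_Ioc_mul_zeta_eq_sum, vonMangoldt_mul_zeta]; rfl

lemma M1 (N : ℕ) (hN : 1 ≤ N) : |AL N - log N| ≤ log 4 + 4 := by
  have hN' : (0:ℝ) < N := by exact_mod_cast hN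
  have h1 := sumlog_lower N
  have h2 := sumlog_upper N
  have h3 := psi_sum_le N
  have u : ∑ n ∈ Ioc 0 N, log (n:ℝ) ≤ N * AL N := by
    rw [sumlog_eq, AL, mul_sum]
    apply sum_le_sum; intro d hd
    have : ((N / d : ℕ):ℝ) ≤ N / d := Nat.cast_div_le
    calc Lam d * ((N / d : ℕ):ℝ) ≤ Lam d * (N / d) := by gcongr
      _ = _ := by ring
  have v : N * AL N - ∑ d ∈ Ioc 0 N, Lam d ≤ ∑ n ∈ Ioc 0 N, log (n:ℝ) := by
    rw [sumlog_eq, AL, mul_sum, ← sum_sub_distrib]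
    apply sum_le_sum; intro d hd
    simp only [mem_Ioc] at hd
    have hd0 : (0:ℝ) < d := by exact_mod_cast hd.1
    have : (N:ℝ) / d - 1 ≤ ((N / d : ℕ):ℝ) := by
      have := Nat.lt_floor_add_one ((N:ℝ)/d)
      rw [Nat.floor_div_eq_div] at this
      linarith
    calc (N:ℝ) * (Lam d / d) - Lam d = Lam d * (N / d - 1) := by ring
      _ ≤ _ := by gcongr
  have h4 : 0 ≤ log 4 := Real.log_nonneg (by norm_num)
  rw [abs_le]; constructor
  · have : 0 ≤ (N:ℝ) * (AL N - log N + 1) := by linarith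
    have := nonneg_of_mul_nonneg_right this hN'
    linarith
  · have : 0 ≤ (N:ℝ) * (log N + (log 4 + 4) - AL N) := by linarith
    have := nonneg_of_mul_nonneg_right this hN'
    linarith

lemma sumlogdiv_eq (N : ℕ) : ∑ n ∈ Ioc 0 N, log (n:ℝ) / n =
    ∑ d ∈ Ioc 0 N, Lam d / d * ∑ m ∈ Ioc 0 (N / d), (1:ℝ) / m := by
  let g : ArithmeticFunction ℝ := ⟨fun n => 1 / (n:ℝ), by simp⟩
  let f : ArithmeticFunction ℝ := ⟨fun n => Lam n / (n:ℝ), by simp⟩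
  have := sum_Ioc_mul_eq_sum_sum f g N
  refine Eq.trans ?_ this
  apply sum_congr rfl
  intro n hn
  rw [mul_apply]
  change _ = ∑ x ∈ n.divisorsAntidiagonal, (Lam x.1 / (x.1:ℝ)) * (1 / (x.2:ℝ))
  rw [← vonMangoldt_sum (n := n), ← Nat.sum_divisorsAntidiagonal (fun x _ => Lam x), sum_div]
  apply sum_congr rfl
  intro x hx
  rw [Nat.mem_divisorsAntidiagonal] at hx
  rw [← hx.1]; push_cast; rw [div_mul_div_comm, mul_one]

lemma harm_eq (n : ℕ) : ∑ m ∈ Ioc 0 n, (1:ℝ) / m = (harmonic n : ℝ) := by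
  induction n with
  | zero => simp
  | succ N ih =>
    rw [← Finset.insert_Ioc_right_eq_Ioc_add_one (by omega), sum_insert (by simp), ih, harmonic_succ]
    push_cast; ring

lemma harm_bd (N d : ℕ) (hd : 1 ≤ d) (hN : d ≤ N) :
    |(harmonic (N / d) : ℝ) - (log N - log d + eulerMascheroniConstant)| ≤ 2 * d / N := by
  have hd0 : (0:ℝ) < d := by exact_mod_cast hd
  have hN0 : (0:ℝ) < N := by exact_mod_cast (hd.trans hN)
  set n := N / d with hn
  have hn1 : 1 ≤ n := (Nat.one_le_div_iff hd).mpr hN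
  have hn0 : (0:ℝ) < n := by exact_mod_cast hn1
  have e1 := eulerMascheroniSeq_lt_eulerMascheroniConstant n
  have e2 := eulerMascheroniConstant_lt_eulerMascheroniSeq' n
  rw [eulerMascheroniSeq] at e1
  rw [eulerMascheroniSeq', if_neg (by omega)] at e2
  have l1 : (n:ℝ) ≤ N / d := Nat.cast_div_le
  have l2 : (N:ℝ) / d < n + 1 := by
    have := Nat.lt_floor_add_one ((N:ℝ)/d)
    rwa [Nat.floor_div_eq_div] at this
  rw [← Real.log_div (by positivity) (by positivity)]
  have k1 := Real.log_le_log hn0 l1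
  have k2 := Real.log_le_log (by positivity) l2.le
  have k3 : log ((n:ℝ)+1) - log n ≤ 1 / n := by
    rw [← Real.log_div (by positivity) (by positivity)]
    refine (Real.log_le_sub_one_of_pos (by positivity)).trans ?_
    apply le_of_eq; field_simp; ring
  have k4 : (1:ℝ) / n ≤ 2 * d / N := by
    rw [div_le_div_iff₀ hn0 hN0]
    have : (1:ℝ) ≤ n := by exact_mod_cast hn1
    rw [div_lt_iff₀ hd0] at l2
    nlinarith
  rw [abs_le]; constructor <;> linarith

lemma log_le_pow8 (n : ℕ) : log (n:ℝ) ≤ 8 * (n:ℝ) ^ (1/8:ℝ) := by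
  have := Real.log_le_rpow_div (x := (n:ℝ)) (by positivity) (ε := 1/8) (by norm_num)
  linarith

lemma sumlogdiv_bd : ∃ R : ℝ, ∀ N : ℕ, 1 ≤ N → |∑ n ∈ Ioc 0 N, log (n:ℝ) / n - (log N)^2 / 2| ≤ R := by
  have hs : Summable (fun n : ℕ => 20 * (n:ℝ) ^ (-(3/2:ℝ))) :=
    (Real.summable_nat_rpow.mpr (by norm_num)).mul_left 20
  refine ⟨∑' n : ℕ, 20 * (n:ℝ) ^ (-(3/2:ℝ)), fun N hN => ?_⟩
  refine le_trans ?_ (hs.sum_le_tsum (Ioc 0 N) (fun n _ => by positivity))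
  induction N, hN using Nat.le_induction with
  | base => simp
  | succ N h ih =>
    rw [← Finset.insert_Ioc_right_eq_Ioc_add_one (by omega), sum_insert (by simp), sum_insert (by simp)]
    have hN : (1:ℝ) ≤ N := by exact_mod_cast h
    have hδ1 : log ((N+1:ℕ):ℝ) - log N ≤ 1 / N := by
      rw [← Real.log_div (by positivity) (by positivity)]
      refine (Real.log_le_sub_one_of_pos (by positivity)).trans ?_
      push_cast; apply le_of_eq; field_simp; ring
    have hδ2 : 1 / ((N+1:ℕ):ℝ) ≤ log ((N+1:ℕ):ℝ) - log N := by
      have := Real.one_sub_inv_le_log_of_pos (x := ((N+1:ℕ):ℝ)/N) (by positivity)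
      rw [Real.log_div (by positivity) (by positivity)] at this
      refine le_trans (le_of_eq ?_) this
      push_cast; field_simp; ring
    set δ := log ((N+1:ℕ):ℝ) - log N with hδ
    set n : ℝ := ((N+1:ℕ):ℝ) with hn
    have hnN : n = N + 1 := by simp [hn]
    set l := log n
    have hl0 : 0 ≤ l := Real.log_nonneg (by linarith)
    have hlu : l ≤ 4 * n ^ (1/2:ℝ) := by
      have := Real.log_le_rpow_div (x := n) (by positivity) (ε := 1/2) (by norm_num)
      have h0 : 0 ≤ n ^ (1/2:ℝ) := by positivity
      linarith
    have hlN : log (N:ℝ) = l - δ := by simp [hδ]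
    have key : |l / n - (δ * l - δ^2/2)| ≤ 20 * n ^ (-(3/2:ℝ)) := by
      have hn2 : 1 / (N:ℝ) ≤ 2 / n := by
        rw [div_le_div_iff₀ (by positivity) (by positivity)]; linarith
      have a1 : 1/(N:ℝ) - 1/n ≤ 2 / n^2 := by
        have : 1/(N:ℝ) - 1/n = (1/N) * (1 / n) := by
          rw [hnN]; field_simp; ring
        rw [this]
        calc _ ≤ (2/n) * (1/n) := by gcongr
          _ = _ := by ring
      have a2 : (δ - 1/n) * l ≤ 2 / n^2 * (4 * n ^ (1/2:ℝ)) := by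
        apply mul_le_mul (by linarith) hlu hl0 (by positivity)
      have a3 : δ^2 ≤ (2/n)^2 := by
        apply pow_le_pow_left₀ _ (hδ1.trans hn2)
        exact le_trans (by positivity) hδ2
      have a4 : 1 / n^2 * n^(1/2:ℝ) = n^(-(3/2:ℝ)) := by
        rw [show (1:ℝ)/n^2 = n^(-2:ℝ) by rw [Real.rpow_neg (by positivity)]; simp, ← Real.rpow_add (by positivity)]; norm_num
      have a5 : 1/ n^2 ≤ n^(-(3/2:ℝ)) := by
        rw [← a4]; nth_rewrite 1 [← mul_one (1/n^2)]
        gcongr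
        exact Real.one_le_rpow (by linarith) (by norm_num)
      have a6 : 0 ≤ (δ - 1/n) * l := mul_nonneg (by linarith) hl0
      have e : l / n - (δ * l - δ^2/2) = δ^2/2 - (δ - 1/n)*l := by ring
      rw [e, abs_le]
      have a7 : 2 / n^2 * (4 * n ^ (1/2:ℝ)) = 8 * n^(-(3/2:ℝ)) := by rw [← a4]; ring
      have a8 : (2/n)^2 = 4 * (1/n^2) := by ring
      have := sq_nonneg δ
      constructor <;> nlinarith
    rw [hlN] at ih
    have e : l / n + ∑ x ∈ Ioc 0 N, log (x:ℝ) / x - l^2/2 =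
       (l / n - (δ * l - δ^2/2)) + (∑ x ∈ Ioc 0 N, log (x:ℝ) / x - (l - δ)^2/2) := by ring
    rw [e]
    exact (abs_add_le _ _).trans (add_le_add key ih)

lemma M3 : ∃ R : ℝ, ∀ N : ℕ, 1 ≤ N → |QL N - (AL N + eulerMascheroniConstant)^2 / 2| ≤ R := by
  obtain ⟨R, hR⟩ := sumlogdiv_bd
  set γ := eulerMascheroniConstant
  have hγ : |γ| ≤ 1 := by
    have := one_half_lt_eulerMascheroniConstant
    have := eulerMascheroniConstant_lt_two_thirds
    rw [abs_le]; constructor <;> linarith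
  set c := log 4 + 4
  have hc : 0 ≤ c := by have : 0 ≤ log 4 := Real.log_nonneg (by norm_num)
                        simp only [c]; linarith
  refine ⟨R + 2 * c + (c + 1)^2 + 1, fun N hN => ?_⟩
  have hN0 : (0:ℝ) < N := by exact_mod_cast hN
  have h1 := hR N hN
  have hA := M1 N hN
  rw [sumlogdiv_eq] at h1
  have h2 : |∑ d ∈ Ioc 0 N, Lam d / d * ∑ m ∈ Ioc 0 (N / d), (1:ℝ) / m -
      ∑ d ∈ Ioc 0 N, Lam d / d * (log N - log d + γ)| ≤ 2 * c := by
    rw [← sum_sub_distrib]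
    refine (abs_sum_le_sum_abs _ _).trans ?_
    calc ∑ d ∈ Ioc 0 N, |Lam d / d * ∑ m ∈ Ioc 0 (N / d), (1:ℝ) / m - Lam d / d * (log N - log d + γ)|
        ≤ ∑ d ∈ Ioc 0 N, 2 / N * Lam d := by
          apply sum_le_sum; intro d hd
          simp only [mem_Ioc] at hd
          have hd0 : (0:ℝ) < d := by exact_mod_cast hd.1
          have hL : 0 ≤ Lam d := vonMangoldt_nonneg
          rw [← mul_sub, harm_eq, abs_mul, abs_of_nonneg (by positivity : 0 ≤ Lam d / d)]
          calc _ ≤ Lam d / d * (2 * d / N) := by gcongr; exact harm_bd N d hd.1 hd.2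
            _ = _ := by field_simp
      _ = 2 / N * ∑ d ∈ Ioc 0 N, Lam d := by rw [mul_sum]
      _ ≤ 2 / N * (c * N) := by gcongr; exact psi_sum_le N
      _ = 2 * c := by field_simp
  have h3 : ∑ d ∈ Ioc 0 N, Lam d / d * (log N - log d + γ) = AL N * (log N + γ) - QL N := by
    rw [AL, QL, sum_mul, ← sum_sub_distrib]
    apply sum_congr rfl; intro d _; ring
  rw [h3] at h2
  set S := ∑ d ∈ Ioc 0 N, Lam d / d * ∑ m ∈ Ioc 0 (N / d), (1:ℝ) / m
  set x := AL N - log N with hx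
  have e : QL N - (AL N + γ)^2/2 = (S - (log N)^2/2) * (-1) + (S - (AL N * (log N + γ) - QL N)) - (x^2/2) - γ^2/2 := by
    rw [hx]; ring
  rw [e]
  have hx2 : x^2 ≤ c^2 := sq_le_sq' (abs_le.mp hA).1 (abs_le.mp hA).2
  have hg2 : γ^2 ≤ 1 := by nlinarith [abs_le.mp hγ]
  have := sq_nonneg x
  have := sq_nonneg γ
  rw [abs_le] at *
  constructor <;> nlinarith

end LSieve

open Real
namespace LSieve
open Finset
open ArithmeticFunction hiding log

noncomputable def eE (n : ℕ) : ℝ := vonMangoldt n / n - if n.Prime then log n / (n - 1) else 0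

lemma vm_le_log (n : ℕ) : vonMangoldt n ≤ log n := vonMangoldt_le_log

lemma log_nat_nonneg (n : ℕ) : 0 ≤ log (n:ℝ) := Real.log_natCast_nonneg n

lemma log_sq_le (n : ℕ) : log (n:ℝ) * log n ≤ 64 * (n:ℝ) ^ (1/4:ℝ) := by
  have h := log_le_pow8 n
  have h0 := log_nat_nonneg n
  calc log (n:ℝ) * log n ≤ (8 * (n:ℝ) ^ (1/8:ℝ)) * (8 * (n:ℝ) ^ (1/8:ℝ)) := by gcongr
    _ = 64 * ((n:ℝ) ^ (1/8:ℝ) * (n:ℝ) ^ (1/8:ℝ)) := by ring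
    _ = _ := by
      rw [← Real.rpow_add_of_nonneg (by positivity) (by norm_num) (by norm_num)]; norm_num

noncomputable def gpp (n : ℕ) : ℝ :=
  if IsPrimePow n ∧ ¬ n.Prime then (n:ℝ) ^ (-(3/4:ℝ)) else 0

lemma gpp_summable : Summable gpp := by
  have h1 : Summable (fun x : ℕ × ℕ => ((x.1:ℝ)) ^ (-(3/2:ℝ)) * ((2:ℝ) ^ (-(3/4:ℝ))) ^ x.2) := by
    apply Summable.mul_of_nonneg (f := fun n : ℕ => (n:ℝ) ^ (-(3/2:ℝ))) (g := fun k : ℕ => ((2:ℝ) ^ (-(3/4:ℝ))) ^ k)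
    · exact Real.summable_nat_rpow.mpr (by norm_num)
    · apply summable_geometric_of_lt_one (by positivity)
      exact Real.rpow_lt_one_of_one_lt_of_neg (by norm_num) (by norm_num)
    · intro n; positivity
    · intro n; positivity
  let s : Set ℕ := {n | IsPrimePow n ∧ ¬ n.Prime}
  have hx : ∀ n : s, ∃ x : ℕ × ℕ, 2 ≤ x.1 ∧ (n:ℕ) = x.1 ^ (x.2 + 2) := by
    rintro ⟨n, hn, hn2⟩
    obtain ⟨p, k, hp, hk, rfl⟩ := hn
    refine ⟨(p, k - 2), (Nat.prime_iff.mpr hp).two_le, ?_⟩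
    have : k ≠ 1 := by
      rintro rfl
      exact hn2 (by simpa using Nat.prime_iff.mpr hp)
    simp only
    rw [Nat.sub_add_cancel (by omega)]
  choose σ hσ1 hσ2 using hx
  have hinj : Function.Injective σ := by
    intro a b hab
    apply Subtype.ext
    rw [hσ2 a, hσ2 b, hab]
  have h2 := h1.comp_injective hinj
  have h3 : Summable (fun n : s => ((n:ℕ):ℝ) ^ (-(3/4:ℝ))) := by
    refine Summable.of_nonneg_of_le (fun n => by positivity) (fun n => ?_) h2
    simp only [Function.comp]
    have h2x : (2:ℝ) ≤ ((σ n).1 : ℝ) := by exact_mod_cast hσ1 n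
    rw [hσ2 n]
    push_cast
    rw [pow_add, Real.mul_rpow (by positivity) (by positivity), mul_comm]
    apply mul_le_mul
    · apply le_of_eq
      rw [← Real.rpow_natCast, ← Real.rpow_mul (by positivity)]; norm_num
    · rw [← Real.rpow_natCast, ← Real.rpow_mul (by positivity), mul_comm, Real.rpow_mul (by positivity), Real.rpow_natCast]
      apply pow_le_pow_left₀ (by positivity)
      exact Real.rpow_le_rpow_of_nonpos (by norm_num) h2x (by norm_num)
    · positivity
    · positivity
  rw [show gpp = s.indicator (fun n => (n:ℝ) ^ (-(3/4:ℝ))) by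
    funext n; simp only [gpp, Set.indicator, s, Set.mem_ofPred_eq]]
  exact summable_subtype_iff_indicator.mp h3

lemma eE_log_summable : Summable (fun n => |eE n| * log n) := by
  have hs : Summable (fun n : ℕ => 128 * (n:ℝ) ^ (-(7/4:ℝ)) + 64 * gpp n) :=
    ((Real.summable_nat_rpow.mpr (by norm_num)).mul_left 128).add (gpp_summable.mul_left 64)
  refine Summable.of_nonneg_of_le (fun n => mul_nonneg (abs_nonneg _) (log_nat_nonneg n)) (fun n => ?_) hs
  have hl := log_sq_le n
  have hl0 := log_nat_nonneg n
  by_cases hp : n.Prime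
  · have h2 : (2:ℝ) ≤ n := by exact_mod_cast hp.two_le
    have e : eE n = - (log n / (n * (n - 1))) := by
      rw [eE, if_pos hp, vonMangoldt_apply_prime hp]
      have : (n:ℝ) - 1 ≠ 0 := by linarith
      field_simp; ring
    rw [e, abs_neg, abs_of_nonneg (div_nonneg hl0 (mul_nonneg (by linarith) (by linarith)))]
    have g0 : 0 ≤ gpp n := by unfold gpp; split_ifs <;> positivity
    calc log n / (n * (n-1)) * log n = (log n * log n) / (n * (n-1)) := by ring
      _ ≤ (64 * (n:ℝ)^(1/4:ℝ)) / (n * (n / 2)) := by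
          gcongr; linarith
      _ = 128 * ((n:ℝ)^(1/4:ℝ) * (n:ℝ)^(-2:ℝ)) := by
          rw [Real.rpow_neg (by positivity)]; simp; field_simp; norm_num
      _ = 128 * (n:ℝ) ^ (-(7/4:ℝ)) := by rw [← Real.rpow_add (by linarith)]; norm_num
      _ ≤ _ := by linarith
  · have e : eE n = vonMangoldt n / n := by simp [eE, hp]
    rw [e, abs_of_nonneg (div_nonneg vonMangoldt_nonneg (by positivity))]
    by_cases hpp : IsPrimePow n
    · have hn : (0:ℝ) < n := by exact_mod_cast hpp.pos
      have : gpp n = (n:ℝ) ^ (-(3/4:ℝ)) := by simp [gpp, hpp, hp]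
      rw [this]
      calc vonMangoldt n / n * log n ≤ log n / n * log n := by gcongr; exact vm_le_log n
        _ = (log n * log n) / n := by ring
        _ ≤ (64 * (n:ℝ)^(1/4:ℝ)) / n := by gcongr
        _ = 64 * ((n:ℝ)^(1/4:ℝ) * (n:ℝ)^(-1:ℝ)) := by
          rw [Real.rpow_neg (by positivity)]; simp; field_simp
        _ = 64 * (n:ℝ) ^ (-(3/4:ℝ)) := by rw [← Real.rpow_add hn]; norm_num
        _ ≤ _ := by
          have : 0 ≤ 128 * (n:ℝ) ^ (-(7/4:ℝ)) := by positivity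
          linarith
    · have : vonMangoldt n = 0 := by rw [vonMangoldt_apply, if_neg hpp]
      rw [this]
      have g0 : 0 ≤ gpp n := by unfold gpp; split_ifs <;> positivity
      simp only [zero_div, zero_mul]
      positivity

lemma eE_zero : eE 0 = 0 := by simp [eE]
lemma eE_one : eE 1 = 0 := by simp [eE]

lemma eE_summable : Summable (fun n => |eE n|) := by
  refine Summable.of_nonneg_of_le (fun n => abs_nonneg _) (fun n => ?_) (eE_log_summable.mul_left (1 / log 2))
  have l2 : 0 < log 2 := Real.log_pos (by norm_num)
  rcases Nat.lt_or_ge n 2 with h | h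
  · interval_cases n <;> simp [eE_zero, eE_one]
  · have : log 2 ≤ log (n:ℝ) := Real.log_le_log (by norm_num) (by exact_mod_cast h)
    rw [div_mul_eq_mul_div, one_mul, le_div_iff₀ l2]
    gcongr

noncomputable def gP (N : ℕ) : ℝ := ∑ n ∈ Ioc 0 N, if n.Prime then log n / ((n:ℝ) - 1) else 0
noncomputable def qP (N : ℕ) : ℝ := ∑ n ∈ Ioc 0 N, if n.Prime then log n / ((n:ℝ) - 1) * log n else 0

lemma AL_gP (N : ℕ) : AL N = gP N + ∑ n ∈ Ioc 0 N, eE n := by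
  rw [AL, gP, ← sum_add_distrib]; apply sum_congr rfl; intro n _; simp [eE]

lemma QL_qP (N : ℕ) : QL N = qP N + ∑ n ∈ Ioc 0 N, eE n * log n := by
  rw [QL, qP, ← sum_add_distrib]; apply sum_congr rfl; intro n _
  by_cases h : n.Prime <;> simp [eE, h] <;> ring

lemma tail_bd (N : ℕ) : |∑' n, eE n - ∑ n ∈ Ioc 0 N, eE n| * log N ≤ ∑' n, |eE n| * log n := by
  have hs : Summable eE := eE_summable.of_abs
  have h1 := hs.sum_add_tsum_compl (s := Ioc 0 N)
  let U : Set ℕ := ((Ioc 0 N : Finset ℕ) : Set ℕ)ᶜ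
  change _ + ∑' b : U, eE b = _ at h1
  rw [← h1, add_sub_cancel_left]
  have hsub : Summable (fun b : U => |eE b|) := eE_summable.subtype _
  have hsub2 : Summable (fun b : U => |eE b| * log (b:ℕ)) := eE_log_summable.subtype _
  have h2 : |∑' b : U, eE b| ≤ ∑' b : U, |eE b| := by
    have := norm_tsum_le_tsum_norm (f := fun b : U => eE b) (by simpa using hsub)
    simpa using this
  calc _ ≤ (∑' b : U, |eE b|) * log N := by
        gcongr
    _ = ∑' b : U, |eE b| * log N := by rw [tsum_mul_right]
    _ ≤ ∑' b : U, |eE b| * log (b:ℕ) := by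
        apply Summable.tsum_le_tsum _ (hsub.mul_right _) hsub2
        rintro ⟨b, hb⟩
        simp only [U, coe_Ioc, Set.mem_compl_iff, Set.mem_Ioc, not_and, not_le] at hb
        rcases Nat.eq_zero_or_pos b with h | h
        · subst h; simp [eE_zero]
        · have hNb := hb h
          simp only
          rcases Nat.eq_zero_or_pos N with h0 | h0
          · subst h0; simp only [Nat.cast_zero, Real.log_zero, mul_zero]
            exact mul_nonneg (abs_nonneg _) (log_nat_nonneg b)
          gcongr
    _ ≤ _ := eE_log_summable.tsum_subtype_le _ _ (fun n => mul_nonneg (abs_nonneg _) (log_nat_nonneg n))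

lemma mertens_primes : ∃ c R : ℝ, 0 ≤ R ∧ ∀ N : ℕ, 1 ≤ N → |gP N + c - log N| ≤ R ∧ |qP N - (gP N + c)^2/2| ≤ R := by
  obtain ⟨R3, h3⟩ := M3
  set γ := eulerMascheroniConstant
  have hγ : |γ| ≤ 1 := by
    have := one_half_lt_eulerMascheroniConstant
    have := eulerMascheroniConstant_lt_two_thirds
    rw [abs_le]; constructor <;> linarith
  set c1 := log 4 + 4
  have hc1 : 0 ≤ c1 := by have : 0 ≤ log 4 := Real.log_nonneg (by norm_num)
                          simp only [c1]; linarith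
  set E0 := ∑' n, |eE n|
  set E1 := ∑' n, |eE n| * log n
  have hE0 : 0 ≤ E0 := tsum_nonneg fun n => abs_nonneg _
  have hE1 : 0 ≤ E1 := tsum_nonneg fun n => mul_nonneg (abs_nonneg _) (log_nat_nonneg n)
  have hR3 : 0 ≤ R3 := (abs_nonneg _).trans (h3 1 le_rfl)
  have hs : Summable eE := eE_summable.of_abs
  set e := ∑' n, eE n
  have he : |e| ≤ E0 := by
    have := norm_tsum_le_tsum_norm (f := eE) (by simpa using eE_summable)
    simpa using this
  refine ⟨γ + e, (c1 + 1 + 2 * E0) + (R3 + 2 * E1 + 2 * E0 * (c1 + 1 + 2 * E0)), by positivity, fun N hN => ?_⟩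
  have hA := M1 N hN
  have hQ := h3 N hN
  have ht := tail_bd N
  change |e - _| * _ ≤ E1 at ht
  rw [AL_gP] at hA hQ
  rw [QL_qP] at hQ
  have b1 : |∑ n ∈ Ioc 0 N, eE n| ≤ E0 := (abs_sum_le_sum_abs _ _).trans
    (eE_summable.sum_le_tsum _ (fun _ _ => abs_nonneg _))
  have b2 : |∑ n ∈ Ioc 0 N, eE n * log n| ≤ E1 := by
    refine (abs_sum_le_sum_abs _ _).trans ?_
    refine le_trans (le_of_eq ?_) (eE_log_summable.sum_le_tsum (Ioc 0 N) (fun n _ => mul_nonneg (abs_nonneg _) (log_nat_nonneg n)))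
    apply sum_congr rfl; intro n _; rw [abs_mul, abs_of_nonneg (log_nat_nonneg n)]
  set s := ∑ n ∈ Ioc 0 N, eE n
  set s2 := ∑ n ∈ Ioc 0 N, eE n * log n
  have hl := log_nat_nonneg N
  set l := log (N:ℝ)
  set τ := e - s with hτ
  have hτ0 : |τ| ≤ 2 * E0 := by
    rw [hτ]; exact (abs_sub _ _).trans (by linarith)
  set a := gP N + s + γ with ha
  have hal : |a - l| ≤ c1 + 1 := by
    rw [show a - l = (gP N + s - l) + γ by rw [ha]; ring]
    exact (abs_add_le _ _).trans (by linarith)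
  have hm : gP N + (γ + e) = a + τ := by rw [ha, hτ]; ring
  rw [hm]
  have q0 : 0 ≤ R3 + 2 * E1 + 2 * E0 * (c1 + 1 + 2 * E0) := by positivity
  constructor
  · rw [show a + τ - l = (a - l) + τ by ring]
    refine (abs_add_le _ _).trans ?_
    linarith
  · have e1 : qP N - (a + τ)^2/2 = (qP N + s2 - a^2/2) - s2 - τ * l - τ * (a - l) - τ * τ / 2 := by ring
    rw [e1]
    have x1 : |τ * l| ≤ E1 := by rw [abs_mul, abs_of_nonneg hl]; exact ht
    have x2 : |τ * (a - l)| ≤ 2 * E0 * (c1 + 1) := by rw [abs_mul]; gcongr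
    have x3 : |τ * τ| ≤ 2 * E0 * (2 * E0) := by rw [abs_mul]; gcongr
    rw [abs_le] at *
    constructor <;> nlinarith

end LSieve

open Real
namespace LSieve
open Finset
open Filter Topology

noncomputable def pp (k : ℕ) : ℕ := Nat.nth Nat.Prime k
noncomputable def tt (k : ℕ) : ℝ := log (pp k)
noncomputable def VV (k : ℕ) : ℝ := ∏ i ∈ range k, (1 - 1 / (pp i : ℝ))

lemma pp_prime (k : ℕ) : (pp k).Prime := Nat.prime_nth_prime k
lemma pp_two (k : ℕ) : (2:ℝ) ≤ pp k := by exact_mod_cast (pp_prime k).two_le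
lemma pp_strictMono : StrictMono pp := Nat.nth_strictMono Nat.infinite_setOfPred_prime
lemma pp_zero : pp 0 = 2 := Nat.nth_prime_zero_eq_two
lemma pp_ge (k : ℕ) : k ≤ pp k := pp_strictMono.le_apply
lemma tt_pos (k : ℕ) : 0 < tt k := Real.log_pos (by have := pp_two k; linarith)
lemma tt_mono : Monotone tt := fun a b h =>
  Real.log_le_log (by have := pp_two a; linarith) (by exact_mod_cast pp_strictMono.monotone h)
lemma tt_tendsto : Tendsto tt atTop atTop :=
  Real.tendsto_log_atTop.comp (tendsto_natCast_atTop_atTop.comp pp_strictMono.tendsto_atTop)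

lemma VV_succ (k : ℕ) : VV (k+1) = VV k * (1 - 1 / pp k) := by simp [VV, prod_range_succ]
lemma VV_pos (k : ℕ) : 0 < VV k := by
  apply prod_pos; intro i _
  have := pp_two i
  have : 1 / (pp i : ℝ) < 1 := by rw [div_lt_one (by linarith)]; linarith
  linarith
lemma VV_anti : Antitone VV := by
  apply antitone_nat_of_succ_le; intro k
  rw [VV_succ]
  have h := VV_pos k
  have : 0 ≤ 1 / (pp k : ℝ) := by positivity
  nlinarith

lemma Ioc_pp (k : ℕ) (φ : ℕ → ℝ) : ∑ n ∈ Ioc 0 (pp k - 1), (if n.Prime then φ n else 0) = ∑ i ∈ range k, φ (pp i) := by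
  have h1 : ∑ n ∈ Ioc 0 (pp k - 1), (if n.Prime then φ n else 0) = ∑ n ∈ (range (pp k)).filter Nat.Prime, φ n := by
    rw [← sum_filter]
    apply sum_congr _ (fun _ _ => rfl)
    ext n
    simp only [mem_filter, mem_Ioc, mem_range]
    have := (pp_prime k).two_le
    constructor
    · rintro ⟨h, hp⟩; exact ⟨by omega, hp⟩
    · rintro ⟨h, hp⟩; exact ⟨⟨hp.pos, by omega⟩, hp⟩
  rw [h1]
  clear h1
  induction k with
  | zero =>
    simp only [range_zero, sum_empty]
    apply sum_eq_zero
    intro n hn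
    simp only [mem_filter, mem_range, pp_zero] at hn
    exact absurd hn.2.two_le (by omega)
  | succ k ih =>
    have := Nat.filter_range_nth_eq_insert_of_infinite Nat.infinite_setOfPred_prime k
    change (range (pp (k+1))).filter Nat.Prime = insert (pp k) ((range (pp k)).filter Nat.Prime) at this
    rw [this, sum_insert (by simp), ih, sum_range_succ, add_comm]

noncomputable def DD (k : ℕ) : ℝ := tt k / ((pp k : ℝ) - 1)

lemma abel_bd (B w : ℕ → ℝ) (b : ℝ) (hB : ∀ k, |B k| ≤ b) (hw : Antitone w) (k j : ℕ) (hkj : k ≤ j) :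
    |∑ i ∈ Ico k j, (B (i+1) - B i) * w i - B j * w j + B k * w k| ≤ b * (w k - w j) := by
  induction j, hkj using Nat.le_induction with
  | base => simp
  | succ j h ih =>
    rw [sum_Ico_succ_top h]
    have e : ∑ i ∈ Ico k j, (B (i+1) - B i) * w i + (B (j+1) - B j) * w j - B (j+1) * w (j+1) + B k * w k
      = (∑ i ∈ Ico k j, (B (i+1) - B i) * w i - B j * w j + B k * w k) + B (j+1) * (w j - w (j+1)) := by ring
    rw [e]
    refine (abs_add_le _ _).trans ?_
    have h1 : |B (j+1) * (w j - w (j+1))| ≤ b * (w j - w (j+1)) := by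
      have h0 : 0 ≤ w j - w (j+1) := sub_nonneg.mpr (hw (by omega))
      rw [abs_mul, abs_of_nonneg h0]
      exact mul_le_mul_of_nonneg_right (hB _) h0
    linarith

lemma DD_sq_sum : ∃ E : ℝ, ∀ k, ∑ i ∈ range k, DD i ^ 2 ≤ E := by
  have hs : Summable (fun n : ℕ => 256 * (n:ℝ) ^ (-(7/4:ℝ))) :=
    (Real.summable_nat_rpow.mpr (by norm_num)).mul_left 256
  have hs2 := hs.comp_injective pp_strictMono.injective
  refine ⟨∑' i, 256 * (pp i:ℝ) ^ (-(7/4:ℝ)), fun k => ?_⟩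
  refine le_trans (sum_le_sum fun i _ => ?_) (hs2.sum_le_tsum (range k) (fun i _ => by positivity))
  have h2 := pp_two i
  have hl := log_sq_le (pp i)
  have h1 : DD i ≤ tt i / (pp i / 2) := by
    unfold DD; have := tt_pos i; gcongr; linarith
  have h0 : 0 ≤ DD i := div_nonneg (tt_pos i).le (by linarith)
  calc DD i ^ 2 ≤ (tt i / (pp i / 2))^2 := by gcongr
    _ = 4 * (tt i * tt i) / (pp i)^2 := by field_simp; norm_num
    _ ≤ 4 * (64 * (pp i : ℝ)^(1/4:ℝ)) / (pp i)^2 := by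
        apply div_le_div_of_nonneg_right _ (by positivity)
        exact mul_le_mul_of_nonneg_left hl (by norm_num)
    _ = 256 * ((pp i:ℝ)^(1/4:ℝ) * (pp i:ℝ)^(-2:ℝ)) := by
          rw [Real.rpow_neg (by positivity)]; simp; ring
    _ = 256 * (pp i:ℝ) ^ (-(7/4:ℝ)) := by rw [← Real.rpow_add (by linarith)]; norm_num

lemma mk_data : ∃ (m : ℕ → ℝ) (R b : ℝ), 0 ≤ R ∧ 0 ≤ b ∧ (∀ k, m (k+1) = m k + DD k) ∧
    (∀ k, |m k - tt k| ≤ R) ∧ (∀ k, |∑ i ∈ range k, (m i - tt i) * DD i| ≤ b) := by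
  obtain ⟨c, R, hR, h⟩ := mertens_primes
  obtain ⟨E, hE⟩ := DD_sq_sum
  have hg : ∀ k, gP (pp k - 1) = ∑ i ∈ range k, DD i := fun k => Ioc_pp k (fun n => log n / ((n:ℝ) - 1))
  have hq : ∀ k, qP (pp k - 1) = ∑ i ∈ range k, DD i * tt i := fun k => Ioc_pp k (fun n => log n / ((n:ℝ) - 1) * log n)
  set m : ℕ → ℝ := fun k => gP (pp k - 1) + c with hm
  have hms : ∀ k, m (k+1) = m k + DD k := by
    intro k; simp only [hm, hg, sum_range_succ]; ring
  have hE0 : 0 ≤ E := by simpa using hE 0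
  have hpos : ∀ k, 1 ≤ pp k - 1 := fun k => by have := (pp_prime k).two_le; omega
  refine ⟨m, R + 1, m 0 ^2/2 + E/2 + R, by positivity, by positivity, hms, fun k => ?_, fun k => ?_⟩
  · have h1 := (h (pp k - 1) (hpos k)).1
    have h2 := pp_two k
    have hc : ((pp k - 1 : ℕ):ℝ) = pp k - 1 := by rw [Nat.cast_sub (pp_prime k).one_le]; simp
    rw [hc] at h1
    have h3 : tt k - log ((pp k:ℝ) - 1) ≤ 1 := by
      rw [tt, ← Real.log_div (by linarith) (by linarith)]
      have hpos : 0 < (pp k:ℝ) - 1 := by linarith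
      refine (Real.log_le_sub_one_of_pos (by positivity)).trans ?_
      have : (pp k:ℝ) / (pp k - 1) ≤ 2 := by rw [div_le_iff₀ hpos]; linarith
      linarith
    have h4 : log ((pp k:ℝ) - 1) ≤ tt k := Real.log_le_log (by linarith) (by linarith)
    change |m k - _| ≤ R at h1
    rw [abs_le] at *
    constructor <;> linarith
  · have h1 := (h (pp k - 1) (hpos k)).2
    change |_ - (m k)^2/2| ≤ R at h1
    rw [hq] at h1
    have e : ∀ k, ∑ i ∈ range k, (m i - tt i) * DD i = (m k)^2/2 - (m 0)^2/2 - (∑ i ∈ range k, DD i^2)/2 - ∑ i ∈ range k, DD i * tt i := by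
      intro k
      induction k with
      | zero => simp
      | succ k ih => rw [sum_range_succ, ih, sum_range_succ, sum_range_succ, hms]; ring
    rw [e]
    have h2 := hE k
    have h3 : 0 ≤ ∑ i ∈ range k, DD i^2 := sum_nonneg fun _ _ => sq_nonneg _
    have := sq_nonneg (m 0)
    rw [abs_le] at *
    constructor <;> linarith

lemma primes_data : ∃ (κ C0 C1 B : ℝ) (β : ℕ → ℝ), 0 < κ ∧ 0 ≤ C0 ∧ 0 ≤ C1 ∧ 0 ≤ B ∧
    ∀ k, |κ / VV k - tt k| ≤ C0 ∧ 0 ≤ β k ∧ β k ≤ B ∧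
      |β (k+1) - β k - (κ / VV k - tt k) * (κ / VV k) / pp k| ≤ C1 / pp k := by
  obtain ⟨m, R, b, hR, hb, hms, hρ, hB⟩ := mk_data
  set Bk : ℕ → ℝ := fun k => ∑ i ∈ range k, (m i - tt i) * DD i with hBk
  set x : ℕ → ℝ := fun k => m k * VV k with hx
  have hxs : ∀ k, x (k+1) - x k = - (m k - tt k) * (VV k - VV (k+1)) := by
    intro k
    have := pp_two k
    have h1 : (pp k : ℝ) - 1 ≠ 0 := by linarith
    have h0 : (pp k : ℝ) ≠ 0 := by linarith
    simp only [hx, hms, VV_succ, DD]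
    field_simp
    ring
  have hVs : ∀ k, 0 ≤ VV k - VV (k+1) := fun k => sub_nonneg.mpr (VV_anti (by omega))
  have hanti : Antitone (fun k => x k + R * VV k) := by
    apply antitone_nat_of_succ_le; intro k
    have h1 := hxs k
    have h2 := hVs k
    have h3 := (abs_le.mp (hρ k)).1
    nlinarith
  have hmono : Monotone (fun k => x k - R * VV k) := by
    apply monotone_nat_of_le_succ; intro k
    have h1 := hxs k
    have h2 := hVs k
    have h3 := (abs_le.mp (hρ k)).2
    nlinarith
  have hVbdd : BddBelow (Set.range VV) := ⟨0, by rintro _ ⟨k, rfl⟩; exact (VV_pos k).le⟩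
  have hVlim := tendsto_atTop_ciInf VV_anti hVbdd
  set V0 := ⨅ i, VV i
  have hxbdd : BddBelow (Set.range (fun k => x k + R * VV k)) := by
    refine ⟨x 0 - R * VV 0, ?_⟩
    rintro _ ⟨k, rfl⟩
    have := hmono (Nat.zero_le k)
    simp only at this ⊢
    have := mul_nonneg hR (VV_pos k).le
    linarith
  have hxlim0 := tendsto_atTop_ciInf hanti hxbdd
  set x0 := ⨅ i, (x i + R * VV i)
  obtain ⟨κ, hκ⟩ : ∃ κ, Tendsto x atTop (𝓝 κ) := by
    refine ⟨x0 - R * V0, ?_⟩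
    have := hxlim0.sub (hVlim.const_mul R)
    simpa using this
  have hV0 : 0 ≤ V0 := le_ciInf fun k => (VV_pos k).le
  -- first bound
  have d1 : ∀ k, |κ - x k| ≤ R * VV k := by
    intro k
    have a1 : κ + R * V0 ≤ x k + R * VV k :=
      Antitone.le_of_tendsto hanti (hκ.add (hVlim.const_mul R)) k
    have a2 : x k - R * VV k ≤ κ - R * V0 :=
      Monotone.ge_of_tendsto hmono (hκ.sub (hVlim.const_mul R)) k
    have := mul_nonneg hR hV0
    rw [abs_le]; constructor <;> linarith
  set w : ℕ → ℝ := fun k => VV (k+1) / tt k with hw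
  have hwanti : Antitone w := by
    intro i j hij
    simp only [hw]
    have := VV_anti (show i+1 ≤ j+1 by omega)
    have := VV_pos (j+1)
    have := VV_pos (i+1)
    have := tt_pos i
    have := tt_mono hij
    gcongr
  have hwpos : ∀ k, 0 < w k := fun k => div_pos (VV_pos _) (tt_pos k)
  have hwle : ∀ k, w k ≤ VV k / tt k := fun k => by
    have := tt_pos k
    have := VV_anti (show k ≤ k+1 by omega)
    simp only [hw]; gcongr
  have hsum : ∀ k j, k ≤ j → ∑ i ∈ Ico k j, (Bk (i+1) - Bk i) * w i = x k - x j := by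
    intro k j hkj
    induction j, hkj using Nat.le_induction with
    | base => simp
    | succ j h ih =>
      rw [sum_Ico_succ_top h, ih]
      have h1 := hxs j
      have h2 : Bk (j+1) - Bk j = (m j - tt j) * DD j := by simp [hBk, sum_range_succ]
      have := pp_two j
      have h3 : (pp j : ℝ) - 1 ≠ 0 := by linarith
      have h0 : (pp j : ℝ) ≠ 0 := by linarith
      have ht := (tt_pos j).ne'
      have h4 : DD j * w j = VV j - VV (j+1) := by
        simp only [hw, VV_succ, DD]; field_simp; ring
      rw [h2, mul_assoc, h4]; linarith
  have d2 : ∀ k, |κ - x k| ≤ 2 * b * (VV k / tt k) := by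
    intro k
    have hlim : Tendsto (fun j => |x j - x k|) atTop (𝓝 |κ - x k|) := (hκ.sub_const _).abs
    refine le_of_tendsto hlim ?_
    filter_upwards [eventually_ge_atTop k] with j hj
    have h1 := abel_bd Bk w b hB hwanti k j hj
    rw [hsum k j hj] at h1
    have h2 : |Bk j * w j| ≤ b * w j := by
      rw [abs_mul, abs_of_pos (hwpos j)]; exact mul_le_mul_of_nonneg_right (hB j) (hwpos j).le
    have h3 : |Bk k * w k| ≤ b * w k := by
      rw [abs_mul, abs_of_pos (hwpos k)]; exact mul_le_mul_of_nonneg_right (hB k) (hwpos k).le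
    have h4 := mul_le_mul_of_nonneg_left (hwle k) hb
    rw [abs_le] at *
    constructor <;> linarith
  have dk : ∀ k, |κ / VV k - m k| ≤ R ∧ |κ / VV k - m k| * tt k ≤ 2 * b := by
    intro k
    have hV := VV_pos k
    have e : κ / VV k - m k = (κ - x k) / VV k := by simp only [hx]; field_simp
    rw [e, abs_div, abs_of_pos hV]
    refine ⟨by rw [div_le_iff₀ hV]; exact d1 k, ?_⟩
    have := d2 k
    have ht := tt_pos k
    calc |κ - x k| / VV k * tt k ≤ (2 * b * (VV k / tt k)) / VV k * tt k := by gcongr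
      _ = 2 * b := by field_simp
  have hC : ∀ k, |κ / VV k - tt k| ≤ 2 * R := by
    intro k
    have h1 := (dk k).1
    have h2 := hρ k
    rw [show κ / VV k - tt k = (κ / VV k - m k) + (m k - tt k) by ring]
    exact (abs_add_le _ _).trans (by linarith)
  have hκ0 : 0 < κ := by
    obtain ⟨k, hk⟩ := (tt_tendsto.eventually_gt_atTop (2 * R)).exists
    have h1 := (abs_le.mp (hC k)).1
    have h2 : 0 < κ / VV k := by linarith
    have := mul_pos h2 (VV_pos k)
    rwa [div_mul_cancel₀ _ (VV_pos k).ne'] at this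
  refine ⟨κ, 2 * R, R + 4 * R^2 + 2 * b, 2 * b, fun k => Bk k + b, hκ0, by positivity, by positivity, by positivity, fun k => ⟨hC k, ?_, ?_, ?_⟩⟩
  · have := (abs_le.mp (hB k)).1; simp only [hBk]; linarith
  · have := (abs_le.mp (hB k)).2; simp only [hBk]; linarith
  · have h2 : Bk (k+1) + b - (Bk k + b) = (m k - tt k) * DD k := by simp [hBk, sum_range_succ]
    have hd := dk k
    have hr := hρ k
    have hc := hC k
    have hp := pp_two k
    have ht := tt_pos k
    have hlog : tt k ≤ pp k - 1 := Real.log_le_sub_one_of_pos (by linarith)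
    rw [h2, DD]
    set p : ℝ := (pp k : ℝ)
    set t := tt k
    set T := κ / VV k
    set ρ := m k - t with hρd
    set D := T - m k with hDd
    set C := T - t with hCd
    have e : ρ * (t / (p - 1)) - C * T / p = (ρ * (t / (p-1)) - ρ * C - D * t - D * C) / p := by
      have : p - 1 ≠ 0 := by linarith
      have : p ≠ 0 := by linarith
      have hCD : C = ρ + D := by simp only [hρd, hDd, hCd]; ring
      have hT : T = t + C := by simp only [hCd]; ring
      have e1 : ρ * (t / (p - 1)) = (ρ * t + ρ * (t / (p-1))) / p := by field_simp; ring
      calc ρ * (t / (p - 1)) - C * T / p = (ρ * t + ρ * (t / (p-1))) / p - C * T / p := by rw [← e1]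
        _ = _ := by rw [hT, hCD]; ring
    rw [e, abs_div, abs_of_pos (by linarith : 0 < p)]
    have hp0 : 0 < p := by linarith
    gcongr
    have q0 : |t / (p-1)| ≤ 1 := by
      rw [abs_of_nonneg (div_nonneg ht.le (by linarith)), div_le_one (by linarith)]; exact hlog
    have q1 : |ρ * (t/(p-1))| ≤ R * 1 := by rw [abs_mul]; gcongr
    have q2 : |ρ * C| ≤ R * (2 * R) := by rw [abs_mul]; gcongr
    have q3 : |D * t| ≤ 2 * b := by rw [abs_mul, abs_of_pos ht]; exact hd.2
    have q4 : |D * C| ≤ R * (2 * R) := by rw [abs_mul]; exact mul_le_mul hd.1 hc (abs_nonneg _) hR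
    rw [abs_le] at q1 q2 q3 q4 ⊢
    constructor <;> nlinarith

end LSieve

open Real
namespace LSieve
open Finset Filter Topology

noncomputable def SSet (u X : ℝ) (k : ℕ) : Finset ℕ :=
  (Ioc ⌊u⌋₊ ⌊u + X⌋₊).filter (fun n => ∀ i < k, ¬ pp i ∣ n)

lemma mem_SSet {u X : ℝ} {k : ℕ} (hu : 0 ≤ u) (hX : 0 ≤ X) (n : ℕ) :
    n ∈ SSet u X k ↔ (u < n ∧ (n:ℝ) ≤ u + X) ∧ ∀ i < k, ¬ pp i ∣ n := by
  rw [SSet, mem_filter, mem_Ioc, Nat.floor_lt hu, Nat.le_floor_iff (by linarith)]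

lemma card_dvd {u X : ℝ} (k : ℕ) (hu : 0 ≤ u) (hX : 0 ≤ X) (p : ℕ) (hp : p.Prime) (hpk : ∀ i < k, pp i ≠ p) :
    ((SSet u X k).filter (fun n => p ∣ n)).card = (SSet (u/p) (X/p) k).card := by
  have hp0 : (0:ℝ) < p := by exact_mod_cast hp.pos
  symm
  apply card_bij (fun m _ => p * m)
  · intro m hm
    rw [mem_SSet (by positivity) (by positivity)] at hm
    rw [mem_filter, mem_SSet hu hX]
    refine ⟨⟨⟨?_, ?_⟩, ?_⟩, Dvd.intro _ rfl⟩
    · have := hm.1.1; rw [div_lt_iff₀ hp0] at this; push_cast; linarith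
    · have := hm.1.2; rw [← add_div, le_div_iff₀ hp0] at this; push_cast; linarith
    · intro i hi hd
      rcases (pp_prime i).dvd_mul.mp hd with h | h
      · exact hpk i hi ((Nat.prime_dvd_prime_iff_eq (pp_prime i) hp).mp h)
      · exact hm.2 i hi h
  · intro a _ b _ h
    exact Nat.eq_of_mul_eq_mul_left hp.pos h
  · intro n hn
    rw [mem_filter, mem_SSet hu hX] at hn
    obtain ⟨⟨⟨h1, h2⟩, h3⟩, m, rfl⟩ := hn
    refine ⟨m, ?_, rfl⟩
    rw [mem_SSet (by positivity) (by positivity)]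
    push_cast at h1 h2
    refine ⟨⟨by rw [div_lt_iff₀ hp0]; linarith, by rw [← add_div, le_div_iff₀ hp0]; linarith⟩, fun i hi hd => h3 i hi (hd.mul_left _)⟩

lemma buchstab (u X : ℝ) (k : ℕ) (hu : 0 ≤ u) (hX : 0 ≤ X) :
    ((SSet u X (k+1)).card : ℝ) = (SSet u X k).card - (SSet (u/pp k) (X/pp k) k).card := by
  have h := card_dvd k hu hX (pp k) (pp_prime k) (fun i hi => (pp_strictMono hi).ne)
  have h2 := card_filter_add_card_filter_not (s := SSet u X k) (fun n => pp k ∣ n)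
  have h3 : (SSet u X k).filter (fun n => ¬ pp k ∣ n) = SSet u X (k+1) := by
    ext n
    simp only [SSet, mem_filter, and_assoc]
    constructor
    · rintro ⟨a, b, c⟩
      refine ⟨a, fun i hi => ?_⟩
      rcases Nat.lt_succ_iff_lt_or_eq.mp hi with h | h
      · exact b i h
      · subst h; exact c
    · rintro ⟨a, b⟩
      exact ⟨a, fun i hi => b i (by omega), b k (by omega)⟩
  rw [h, h3] at h2
  have : ((SSet (u/pp k) (X/pp k) k).card : ℝ) + (SSet u X (k+1)).card = (SSet u X k).card := by exact_mod_cast h2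
  linarith

lemma base_bd (k : ℕ) : ∀ u X : ℝ, 0 ≤ u → 0 ≤ X → |((SSet u X k).card : ℝ) - X * VV k| ≤ 2 ^ k := by
  induction k with
  | zero =>
    intro u X hu hX
    have : SSet u X 0 = Ioc ⌊u⌋₊ ⌊u + X⌋₊ := by simp [SSet]
    rw [this, Nat.card_Ioc, Nat.cast_sub (Nat.floor_mono (by linarith))]
    have a1 := Nat.floor_le hu
    have a2 := Nat.lt_floor_add_one u
    have a3 := Nat.floor_le (by linarith : 0 ≤ u + X)
    have a4 := Nat.lt_floor_add_one (u + X)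
    simp only [VV, range_zero, prod_empty, pow_zero, abs_le]
    constructor <;> linarith
  | succ k ih =>
    intro u X hu hX
    have hp := pp_two k
    have h1 := ih u X hu hX
    have h2 := ih (u/pp k) (X/pp k) (by positivity) (by positivity)
    rw [buchstab u X k hu hX, VV_succ]
    have e : ((SSet u X k).card : ℝ) - (SSet (u/pp k) (X/pp k) k).card - X * (VV k * (1 - 1 / pp k))
      = (((SSet u X k).card : ℝ) - X * VV k) - ((SSet (u/pp k) (X/pp k) k).card - X / pp k * VV k) := by ring
    rw [e]
    refine (abs_sub _ _).trans ?_
    rw [pow_succ]; linarith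

def PU (c M : ℝ) (β v a : ℕ → ℝ) (k : ℕ) : Prop := ∀ u X : ℝ, 0 ≤ u → 0 < X →
  1/8 ≤ (log X - a k) * v k →
  ((SSet u X k).card : ℝ) ≤ c * X * (v k * F ((log X - a k) * v k) - β k * (v k)^3 * df ((log X - a k) * v k - 1)
    + M * (v k)^3 * exp (-((log X - a k) * v k)))

def PL (c M : ℝ) (β v a : ℕ → ℝ) (k : ℕ) : Prop := ∀ u X : ℝ, 0 ≤ u → 0 < X →
  2 ≤ (log X - a k) * v k →
  -((SSet u X k).card : ℝ) ≤ c * X * (v k * (- f ((log X - a k) * v k)) - β k * (v k)^3 * (-dF ((log X - a k) * v k - 1))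
    + M * (v k)^3 * exp (-((log X - a k) * v k)))

lemma ind_step (K m0 : ℝ) (hK : 0 < K) (hm0 : 0 < m0)
    (gF : Good F (fun s => - f s) (fun s => df (s - 1)) (1/8) K m0)
    (gf : Good (fun s => - f s) F (fun s => - dF (s - 1)) 2 K m0)
    (κ C0 C1 B c M M' : ℝ) (β v a : ℕ → ℝ) (hκ : 0 < κ) (hc : 0 < c) (hM : 0 < M) (hM' : m0 * M' = 32 * M)
    (hv : ∀ k, v k = VV k / κ) (k : ℕ)
    (ha : a (k+1) = a k + M' * v k / pp k)
    (hp : (100:ℝ) ≤ pp k) (hC : |κ / VV k - tt k| ≤ C0) (hCv : C0 * v k ≤ 1/4)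
    (hβ : 0 ≤ β k) (hβ' : 0 ≤ β (k+1)) (hβB : β (k+1) ≤ B)
    (hΔ : |β (k+1) - β k - (κ / VV k - tt k) * (κ / VV k) / pp k| ≤ C1 / pp k)
    (hKM : K*(C0^2+C1+B*(1+8*M'*(v k)^2)) ≤ M)
    (hU : PU c M β v a k) (hL : PL c M β v a k) :
    PU c M β v a (k+1) ∧ PL c M β v a (k+1) := by
  have hV := VV_pos k
  have hvk : 0 < v k := by rw [hv]; positivity
  have hvs : v (k+1) = v k * (1 - 1 / pp k) := by rw [hv, hv, VV_succ]; ring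
  have hM'0 : 0 < M' := by
    have : 0 < m0 * M' := by rw [hM']; positivity
    exact (pos_iff_pos_of_mul_pos this).mp hm0
  have hp0 : (0:ℝ) < pp k := by linarith
  have h1p : 1 / (pp k : ℝ) ≤ 1/100 := one_div_le_one_div_of_le (by norm_num) hp
  have h1p0 : 0 < 1 / (pp k : ℝ) := by positivity
  have hTv : κ / VV k = 1 / v k := by rw [hv, one_div_div]
  rw [hTv] at hC hΔ
  set C := 1 / v k - tt k with hCdef
  have hΔ' : |β (k+1) - β k - C / (v k * pp k)| ≤ C1 / pp k := by
    rw [show C / (v k * pp k) = C * (1 / v k) / pp k by field_simp]; exact hΔ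
  have common : ∀ X : ℝ, ∀ d : ℝ, 1/8 ≤ d → d ≤ (log X - a (k+1)) * v (k+1) →
      0 < log X - a k ∧ d ≤ (log X - a k) * v k ∧
      (log X - a (k+1)) * v (k+1) = ((log X - a k) - M' * v k / pp k) * (v k * (1 - 1 / pp k)) := by
    intro X d hd h
    have e1 : (log X - a (k+1)) * v (k+1) = ((log X - a k) - M' * v k / pp k) * (v k * (1 - 1 / pp k)) := by
      rw [hvs, ha]; ring
    have hv1 : 0 < v (k+1) := by rw [hvs]; exact mul_pos hvk (by linarith)
    have h3 : 0 < log X - a (k+1) := by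
      by_contra hcon
      push Not at hcon
      have := mul_nonpos_of_nonpos_of_nonneg hcon hv1.le
      linarith
    have h4 : 0 < M' * v k / pp k := by positivity
    have h5 : log X - a (k+1) ≤ log X - a k := by rw [ha]; linarith
    have h6 : v (k+1) ≤ v k := by rw [hvs]; nlinarith
    refine ⟨by linarith, h.trans ?_, e1⟩
    exact mul_le_mul h5 h6 hv1.le (by linarith)
  have sec : ∀ X : ℝ, 0 < X → (log (X / pp k) - a k) * v k = (log X - a k) * v k - 1 + C * v k := by
    intro X hX
    rw [Real.log_div hX.ne' hp0.ne']
    change (log X - tt k - a k) * v k = _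
    rw [hCdef]; field_simp; ring
  have hv3 : 0 < (v k)^3 := by positivity
  have hCv' : |C * v k| ≤ 1/4 := by
    rw [abs_mul, abs_of_pos hvk]
    exact (mul_le_mul_of_nonneg_right hC hvk.le).trans hCv
  constructor
  · intro u X hu hX hs
    obtain ⟨hℒ, hs0, e1⟩ := common X (1/8) le_rfl hs
    have hst := step gF le_rfl hK hm0 (log X - a k) (v k) (pp k) C0 C1 B M M' C (β k) (β (k+1)) hp hvk hC hCv hβ hβ' hβB hΔ' hM hM' hKM hℒ (by rw [← e1]; exact hs)
    rw [← e1, ← hvs] at hst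
    have hA := hU u X hu hX hs0
    have hB2 : -((SSet (u/pp k) (X/pp k) k).card : ℝ) ≤ c * (X / pp k) *
        (v k * (- f ((log X - a k) * v k - 1 + C * v k)) + M * (v k)^3 * exp (-((log X - a k) * v k - 1 + C * v k))) := by
      rcases lt_or_ge ((log X - a k) * v k - 1 + C * v k) 2 with h | h
      · rw [f_of_le _ h.le]
        have : (0:ℝ) ≤ (SSet (u/pp k) (X/pp k) k).card := by positivity
        have : 0 ≤ c * (X / pp k) * (v k * (- 0) + M * (v k)^3 * exp (-((log X - a k) * v k - 1 + C * v k))) := by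
          rw [neg_zero, mul_zero, zero_add]; positivity
        linarith
      · have h2 := hL (u/pp k) (X/pp k) (by positivity) (by positivity) (by rw [sec X hX]; exact h)
        rw [sec X hX] at h2
        refine h2.trans ?_
        apply mul_le_mul_of_nonneg_left _ (by positivity)
        have h3 := dF_neg ((log X - a k) * v k - 1 + C * v k - 1) (by linarith)
        have h4 : 0 ≤ β k * (v k)^3 * (-dF ((log X - a k) * v k - 1 + C * v k - 1)) :=
          mul_nonneg (mul_nonneg hβ hv3.le) (by linarith)
        linarith
    rw [buchstab u X k hu hX.le]
    have hfin := mul_le_mul_of_nonneg_left hst (by positivity : 0 ≤ c * X)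
    refine le_trans ?_ hfin
    refine le_trans (add_le_add hA hB2) (le_of_eq ?_)
    ring
  · intro u X hu hX hs
    obtain ⟨hℒ, hs0, e1⟩ := common X 2 (by norm_num) hs
    have hst := step gf (by norm_num) hK hm0 (log X - a k) (v k) (pp k) C0 C1 B M M' C (β k) (β (k+1)) hp hvk hC hCv hβ hβ' hβB hΔ' hM hM' hKM hℒ (by rw [← e1]; exact hs)
    rw [← e1, ← hvs] at hst
    have hA := hL u X hu hX hs0
    have hB2 : ((SSet (u/pp k) (X/pp k) k).card : ℝ) ≤ c * (X / pp k) *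
        (v k * F ((log X - a k) * v k - 1 + C * v k) + M * (v k)^3 * exp (-((log X - a k) * v k - 1 + C * v k))) := by
      have hs2 : 1/8 ≤ (log X - a k) * v k - 1 + C * v k := by
        have := (abs_le.mp hCv').1
        linarith
      have h2 := hU (u/pp k) (X/pp k) (by positivity) (by positivity) (by rw [sec X hX]; exact hs2)
      rw [sec X hX] at h2
      refine h2.trans ?_
      apply mul_le_mul_of_nonneg_left _ (by positivity)
      have h3 := df_nonneg ((log X - a k) * v k - 1 + C * v k - 1)
      have h4 := mul_nonneg (mul_nonneg hβ hv3.le) h3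
      linarith
    rw [buchstab u X k hu hX.le]
    have hfin := mul_le_mul_of_nonneg_left hst (by positivity : 0 ≤ c * X)
    refine le_trans ?_ hfin
    refine le_trans (le_of_eq ?_) ((add_le_add hA hB2).trans (le_of_eq ?_))
    · ring
    · ring

theorem sieve : ∃ (κ C0 c M A : ℝ) (k0 : ℕ), 0 < κ ∧ 0 ≤ C0 ∧ 0 < c ∧ 0 < M ∧ 0 ≤ A ∧
    (∀ k, |κ / VV k - tt k| ≤ C0) ∧
    ∀ k, k0 ≤ k → ∃ a, 0 ≤ a ∧ a ≤ A ∧ ∀ u X : ℝ, 0 ≤ u → 0 < X →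
      (1/8 ≤ (log X - a) * (VV k / κ) → ((SSet u X k).card : ℝ) ≤
        c * X * ((VV k / κ) * F ((log X - a) * (VV k / κ)) + M * (VV k / κ)^3)) ∧
      (2 ≤ (log X - a) * (VV k / κ) →
        c * X * ((VV k / κ) * f ((log X - a) * (VV k / κ)) - M * (VV k / κ)^3) ≤ ((SSet u X k).card : ℝ)) := by
  obtain ⟨κ, C0, C1, B, β, hκ, hC0, hC1, hB, hdat⟩ := primes_data
  obtain ⟨K1, m1, hK1, hm1, gF⟩ := good_F
  obtain ⟨K2, m2, hK2, hm2, gf⟩ := good_f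
  obtain ⟨l, hl, hlf⟩ := exists_ell
  set K := max K1 K2
  set m0 := min m1 m2
  have hK : 0 < K := lt_max_of_lt_left hK1
  have hm0 : 0 < m0 := lt_min hm1 hm2
  replace gF := gF.mono (by norm_num) (le_max_left K1 K2) (min_le_left m1 m2)
  replace gf := gf.mono (by norm_num) (le_max_right K1 K2) (min_le_right m1 m2)
  change Good _ _ _ _ K m0 at gF
  change Good _ _ _ _ K m0 at gf
  set v : ℕ → ℝ := fun k => VV k / κ with hv
  have hvpos : ∀ k, 0 < v k := fun k => div_pos (VV_pos k) hκ
  have hvanti : Antitone v := fun i j h => by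
    simp only [hv]; have := VV_anti h; gcongr
  have hinv : ∀ k, 1 / v k = κ / VV k := fun k => by simp only [hv]; rw [one_div_div]
  -- smallness
  have hsmall : ∀ ε : ℝ, 0 < ε → ∀ᶠ k in atTop, v k ≤ ε := by
    intro ε hε
    filter_upwards [tt_tendsto.eventually_ge_atTop (1/ε + C0)] with k hk
    have h1 := (abs_le.mp (hdat k).1).1
    rw [← hinv] at h1
    have h2 : 1 / ε ≤ 1 / v k := by linarith
    exact (one_div_le_one_div hε (hvpos k)).mp h2
  have hppev : ∀ᶠ k in atTop, (100:ℝ) ≤ pp k := by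
    filter_upwards [eventually_ge_atTop 100] with k hk
    exact_mod_cast hk.trans (pp_ge k)
  obtain ⟨k0, hk0a, hk0b, hk0c, hk0p⟩ := ((hsmall 1 (by norm_num)).and ((hsmall (1/(4*(C0+1))) (by positivity)).and
    ((hsmall (m0/(512*K*(B+1))) (by positivity)).and hppev))).exists
  set v0 := v k0 with hv0
  have hv0p : 0 < v0 := hvpos k0
  set c := κ / l with hc
  have hcp : 0 < c := by positivity
  set M := 2*(K*(C0^2+C1+B)) + B*K + 2^k0/(c*v0^3) + 1 with hM
  have hMp : 0 < M := by positivity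
  set M' := 32 * M / m0 with hM'
  have hM'p : 0 < M' := by positivity
  have hM'e : m0 * M' = 32 * M := by rw [hM']; field_simp
  set a : ℕ → ℝ := fun k => M' * (v0 - v k) with ha
  have has : ∀ k, a (k+1) = a k + M' * v k / pp k := by
    intro k
    have : v (k+1) = v k * (1 - 1 / pp k) := by simp only [hv]; rw [VV_succ]; ring
    simp only [ha]; rw [this]; ring
  have hcvl : ∀ k, c * v k * l = VV k := by
    intro k; simp only [hc, hv]; field_simp
  have main : ∀ k, k0 ≤ k → PU c M β v a k ∧ PL c M β v a k := by
    intro k hk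
    induction k, hk using Nat.le_induction with
    | base =>
      have ha0 : a k0 = 0 := by simp [ha, hv0]
      have hXe : ∀ X : ℝ, 0 < X → 0 < log X * v0 → 1 ≤ X * exp (-(log X * v0)) := by
        intro X hX h
        have hlog : 0 < log X := by
          by_contra hcon
          push Not at hcon
          have := mul_nonpos_of_nonpos_of_nonneg hcon hv0p.le
          linarith
        have : log X * v0 ≤ log X := by nlinarith
        calc (1:ℝ) = exp (log X) * exp (-(log X)) := by rw [← Real.exp_add]; simp
          _ ≤ X * exp (-(log X * v0)) := by
            rw [Real.exp_log hX]
            gcongr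
      have hMb : 2^k0 ≤ c * v0^3 * (M - B*K) := by
        have h1 : 2^k0/(c*v0^3) ≤ M - B*K := by
          have : 0 ≤ 2*(K*(C0^2+C1+B)) := by positivity
          rw [hM]; linarith
        rw [div_le_iff₀ (by positivity)] at h1
        linarith
      have hMBK : 0 ≤ M - B * K := by
        by_contra hcon
        push Not at hcon
        have := mul_nonpos_of_nonneg_of_nonpos (by positivity : 0 ≤ c * v0^3) hcon.le
        have : (0:ℝ) < 2^k0 := by positivity
        linarith
      have hβk := hdat k0
      constructor
      · intro u X hu hX hs
        rw [ha0, sub_zero] at *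
        set s := log X * v0
        have hb := (abs_le.mp (base_bd k0 u X hu hX.le)).2
        have h1 := hXe X hX (by linarith)
        have h2 := (hlf s).2 (by linarith)
        have h3 := gF.HK s hs
        have h4 : 2^k0 ≤ (X * exp (-s)) * (c * v0^3 * (M - B*K)) := by
          refine hMb.trans ?_
          exact le_mul_of_one_le_left (by positivity) h1
        have h5 : β k0 * df (s - 1) ≤ B * (K * exp (-s)) :=
          mul_le_mul hβk.2.2.1 h3 (df_nonneg _) hB
        have h6 : X * VV k0 ≤ c * X * (v0 * F s) := by
          rw [← hcvl k0]
          have : c * X * v0 * l ≤ c * X * v0 * F s := by gcongr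
          linarith
        have h7 := mul_le_mul_of_nonneg_left h5 (by positivity : 0 ≤ c * X * v0^3)
        have e : c * X * (v0 * F s - β k0 * v0^3 * df (s-1) + M * v0^3 * exp (-s)) =
          c * X * (v0 * F s) - c * X * v0^3 * (β k0 * df (s-1)) + c * X * v0^3 * (M * exp (-s)) := by ring
        change _ ≤ c * X * (v0 * F s - β k0 * v0^3 * df (s-1) + M * v0^3 * exp (-s))
        rw [e]
        linarith
      · intro u X hu hX hs
        rw [ha0, sub_zero] at *
        set s := log X * v0
        have hb := (abs_le.mp (base_bd k0 u X hu hX.le)).1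
        have h1 := hXe X hX (by linarith)
        have h2 := (hlf s).1
        have h3 := gf.HK s hs
        have h4 : 2^k0 ≤ (X * exp (-s)) * (c * v0^3 * (M - B*K)) := by
          refine hMb.trans ?_
          exact le_mul_of_one_le_left (by positivity) h1
        have hd := dF_neg (s-1) (by linarith)
        have h5 : β k0 * (-dF (s - 1)) ≤ B * (K * exp (-s)) :=
          mul_le_mul hβk.2.2.1 h3 (by linarith) hB
        have h6 : c * X * (v0 * f s) ≤ X * VV k0 := by
          rw [← hcvl k0]
          have : c * X * v0 * f s ≤ c * X * v0 * l := by gcongr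
          linarith
        have h7 := mul_le_mul_of_nonneg_left h5 (by positivity : 0 ≤ c * X * v0^3)
        have e : c * X * (v0 * (-f s) - β k0 * v0^3 * (-dF (s-1)) + M * v0^3 * exp (-s)) =
          -(c * X * (v0 * f s)) - c * X * v0^3 * (β k0 * (-dF (s-1))) + c * X * v0^3 * (M * exp (-s)) := by ring
        change _ ≤ c * X * (v0 * (-f s) - β k0 * v0^3 * (-dF (s-1)) + M * v0^3 * exp (-s))
        rw [e]
        linarith
    | succ k hk ih =>
      have hvk : v k ≤ v0 := hvanti hk
      have hvkp := hvpos k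
      refine ind_step K m0 hK hm0 gF gf κ C0 C1 B c M M' β v a hκ hcp hMp hM'e (fun k => rfl) k (has k) ?_
        (hdat k).1 ?_ (hdat k).2.1 (hdat (k+1)).2.1 (hdat (k+1)).2.2.1 (hdat k).2.2.2 ?_ ih.1 ih.2
      · exact hk0p.trans (by exact_mod_cast pp_strictMono.monotone hk)
      · have h1 : v k ≤ 1/(4*(C0+1)) := hvk.trans hk0b
        calc C0 * v k ≤ (C0+1) * (1/(4*(C0+1))) := by gcongr; linarith
          _ = 1/4 := by field_simp
      · have h1 : v k ≤ m0/(512*K*(B+1)) := hvk.trans hk0c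
        have h2 : (v k)^2 ≤ m0/(512*K*(B+1)) := by
          have : v k ≤ 1 := hvk.trans hk0a
          nlinarith
        have h3 : K * (B * (8 * M' * (v k)^2)) ≤ M / 2 := by
          calc K * (B * (8 * M' * (v k)^2)) ≤ K * ((B+1) * (8 * M' * (m0/(512*K*(B+1))))) := by gcongr; linarith
            _ = M / 2 := by rw [hM']; field_simp; norm_num
        have h4 : K*(C0^2+C1+B) ≤ M / 2 := by
          have : 0 ≤ B*K + 2^k0/(c*v0^3) + 1 := by positivity
          rw [hM]; linarith
        linarith
  refine ⟨κ, C0, c, M, M' * v0, k0, hκ, hC0, hcp, hMp, by positivity, fun k => (hdat k).1, fun k hk => ?_⟩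
  have hvk : v k ≤ v0 := hvanti hk
  have hvkp := hvpos k
  refine ⟨a k, mul_nonneg hM'p.le (by linarith), mul_le_mul_of_nonneg_left (by linarith) hM'p.le, fun u X hu hX => ⟨fun hs => ?_, fun hs => ?_⟩⟩
  · have h := (main k hk).1 u X hu hX hs
    refine h.trans ?_
    apply mul_le_mul_of_nonneg_left _ (by positivity)
    change v k * F ((log X - a k) * v k) - _ + _ ≤ v k * F ((log X - a k) * v k) + M * (v k)^3
    have h1 := mul_nonneg (mul_nonneg (hdat k).2.1 (pow_pos hvkp 3).le) (df_nonneg ((log X - a k) * v k - 1))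
    have h2 : exp (-((log X - a k) * v k)) ≤ 1 := Real.exp_le_one_iff.mpr (by change 1/8 ≤ (log X - a k) * v k at hs; linarith)
    have h3 : M * (v k)^3 * exp (-((log X - a k) * v k)) ≤ M * (v k)^3 * 1 := by gcongr
    linarith
  · have h := (main k hk).2 u X hu hX hs
    change 2 ≤ (log X - a k) * v k at hs
    have h1 := mul_nonneg (mul_nonneg (hdat k).2.1 (pow_pos hvkp 3).le) (by have := dF_neg ((log X - a k) * v k - 1) (by linarith); linarith : 0 ≤ -dF ((log X - a k) * v k - 1))
    have h2 : exp (-((log X - a k) * v k)) ≤ 1 := Real.exp_le_one_iff.mpr (by linarith)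
    have h3 : M * (v k)^3 * exp (-((log X - a k) * v k)) ≤ M * (v k)^3 * 1 := by gcongr
    have h4 : v k * (- f ((log X - a k) * v k)) - β k * (v k)^3 * (-dF ((log X - a k) * v k - 1))
       + M * (v k)^3 * exp (-((log X - a k) * v k)) ≤ -(v k * f ((log X - a k) * v k) - M * (v k)^3) := by linarith
    have h5 := mul_le_mul_of_nonneg_left h4 (by positivity : 0 ≤ c * X)
    change c * X * (v k * f ((log X - a k) * v k) - M * (v k)^3) ≤ _
    linarith

end LSieve

open Real
namespace LSieve
open Finset Filter Topology

lemma indep_exists (G : Finset ℕ) (r : ℕ → ℕ → Prop) (hr : ∀ a b, r a b → r b a) (hirr : ∀ a, ¬ r a a) (D : ℝ)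
    [DecidableRel r]
    (hD : (((G ×ˢ G).filter (fun x => r x.1 x.2)).card : ℝ) ≤ D) :
    ∃ S ⊆ G, (∀ m ∈ S, ∀ n ∈ S, ¬ r m n) ∧ (G.card : ℝ)^2 ≤ S.card * (2 * G.card + 4 * D) := by
  classical
  rcases Finset.eq_empty_or_nonempty G with h | hne
  · subst h; exact ⟨∅, by simp, by simp, by simp⟩
  have hN : (0:ℝ) < G.card := by exact_mod_cast hne.card_pos
  have hD0 : 0 ≤ D := le_trans (by positivity) hD
  set deg : ℕ → ℕ := fun a => (G.filter (fun b => r a b)).card with hdeg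
  have hsum : ∑ a ∈ G, (deg a : ℝ) ≤ D := by
    refine le_trans (le_of_eq ?_) hD
    rw [card_filter, sum_product]
    push_cast
    apply sum_congr rfl
    intro a _
    simp only [hdeg]
    rw [card_filter]; push_cast; rfl
  set G' := G.filter (fun a => (deg a : ℝ) * G.card ≤ 2 * D) with hG'
  have hbad : ((G.filter (fun a => ¬ (deg a : ℝ) * G.card ≤ 2 * D)).card : ℝ) * 2 ≤ G.card := by
    by_contra hcon
    rw [not_le] at hcon
    set Bd := G.filter (fun a => ¬ (deg a : ℝ) * G.card ≤ 2 * D)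
    have h1 : (Bd.card : ℝ) * (2 * D / G.card) < D ∨ (Bd.card : ℝ) * (2 * D / G.card) ≤ D := by
      right
      refine le_trans ?_ hsum
      calc (Bd.card : ℝ) * (2 * D / G.card) = ∑ a ∈ Bd, (2 * D / G.card) := by simp
        _ ≤ ∑ a ∈ Bd, (deg a : ℝ) := by
          apply sum_le_sum; intro a ha
          have := (mem_filter.mp ha).2
          push Not at this
          rw [div_le_iff₀ hN]; exact this.le
        _ ≤ _ := sum_le_sum_of_subset_of_nonneg (filter_subset _ _) (fun _ _ _ => by positivity)
    rcases hD0.eq_or_lt with h0 | h0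
    · -- D = 0: all degrees zero
      have hz : ∀ a ∈ G, (deg a : ℝ) = 0 := by
        have : ∑ a ∈ G, (deg a : ℝ) = 0 := le_antisymm (by linarith) (sum_nonneg fun _ _ => by positivity)
        exact (sum_eq_zero_iff_of_nonneg (fun _ _ => by positivity)).mp this
      have : Bd = ∅ := by
        apply filter_eq_empty_iff.mpr
        intro a ha
        rw [hz a ha, not_not]; linarith
      rw [this] at hcon; simp at hcon; linarith
    · have h2 : (Bd.card : ℝ) * (2 * D / G.card) ≤ D := by rcases h1 with h | h; exact h.le; exact h
      have h3 : (Bd.card : ℝ) * 2 / G.card * D ≤ 1 * D := by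
        calc _ = (Bd.card : ℝ) * (2 * D / G.card) := by ring
          _ ≤ 1 * D := by linarith
      have h4 := le_of_mul_le_mul_right h3 h0
      rw [div_le_one hN] at h4
      linarith
  have hG'card : (G.card : ℝ) ≤ 2 * G'.card := by
    have := card_filter_add_card_filter_not (s := G) (fun a => (deg a : ℝ) * G.card ≤ 2 * D)
    have h2 : (G'.card : ℝ) + (G.filter (fun a => ¬ (deg a : ℝ) * G.card ≤ 2 * D)).card = G.card := by
      rw [← Nat.cast_add]; exact congrArg (Nat.cast : ℕ → ℝ) this
    linarith
  -- maximal independent set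
  set I := G'.powerset.filter (fun S => ∀ m ∈ S, ∀ n ∈ S, ¬ r m n) with hI
  have hIne : I.Nonempty := ⟨∅, by simp [hI]⟩
  obtain ⟨S, hS, hmax⟩ := exists_max_image I card hIne
  simp only [hI, mem_filter, mem_powerset] at hS hmax
  refine ⟨S, hS.1.trans (filter_subset _ _), hS.2, ?_⟩
  have hcov : G' ⊆ S ∪ S.biUnion (fun a => G.filter (fun b => r a b)) := by
    intro b hb
    by_contra hcon
    simp only [mem_union, mem_biUnion, mem_filter, not_or, not_exists, not_and] at hcon
    have hbG : b ∈ G := (mem_filter.mp hb).1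
    have hnr : ∀ a ∈ S, ¬ r a b := fun a ha => hcon.2 a ha hbG
    have := hmax (insert b S) ⟨insert_subset hb hS.1, by
      intro m hm n hn
      rw [mem_insert] at hm hn
      rcases hm with rfl | hm <;> rcases hn with rfl | hn
      · exact hirr _
      · exact fun h => hnr n hn (hr _ _ h)
      · exact hnr m hm
      · exact hS.2 m hm n hn⟩
    rw [card_insert_of_notMem hcon.1] at this
    omega
  have hc : (G'.card : ℝ) ≤ S.card + ∑ a ∈ S, (deg a : ℝ) := by
    have h1 := (card_le_card hcov).trans (card_union_le _ _)
    have h2 : (S.biUnion (fun a => G.filter (fun b => r a b))).card ≤ ∑ a ∈ S, deg a := card_biUnion_le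
    have h3 : G'.card ≤ S.card + ∑ a ∈ S, deg a := by omega
    exact_mod_cast h3
  have hd2 : ∑ a ∈ S, (deg a : ℝ) * G.card ≤ S.card * (2 * D) := by
    calc _ ≤ ∑ a ∈ S, 2 * D := sum_le_sum fun a ha => (mem_filter.mp (hS.1 ha)).2
      _ = _ := by simp
  rw [← sum_mul] at hd2
  nlinarith

lemma prime_sq_sum (w N : ℕ) (hw : 1 ≤ w) (hN : w ≤ N) :
    ∑ n ∈ Ioc w N, (if n.Prime then log n / (n:ℝ)^2 else 0) ≤ 3 * log 4 / w := by
  have l4 : 0 ≤ log 4 := Real.log_nonneg (by norm_num)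
  have hw0 : (0:ℝ) < w := by exact_mod_cast hw
  have key : ∀ N, w ≤ N → ∑ n ∈ Ioc w N, (if n.Prime then log n / (n:ℝ)^2 else 0) - Chebyshev.theta N / (N:ℝ)^2 + 2 * log 4 / N ≤ 2 * log 4 / w := by
    intro N hN
    induction N, hN using Nat.le_induction with
    | base =>
      simp only [Ioc_self, sum_empty]
      have := Chebyshev.theta_nonneg (w:ℝ)
      have : 0 ≤ Chebyshev.theta w / (w:ℝ)^2 := by positivity
      linarith
    | succ N h ih =>
      refine le_trans ?_ ih
      rw [← Finset.insert_Ioc_right_eq_Ioc_add_one (by omega), sum_insert (by simp)]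
      have hth : Chebyshev.theta ((N+1:ℕ):ℝ) = Chebyshev.theta N + if (N+1).Prime then log ((N+1:ℕ):ℝ) else 0 := by
        rw [Chebyshev.theta_eq_sum_Icc, Chebyshev.theta_eq_sum_Icc, Nat.floor_natCast, Nat.floor_natCast, sum_filter, sum_filter,
          ← Nat.range_succ_eq_Icc_zero, ← Nat.range_succ_eq_Icc_zero, sum_range_succ]
      have hN0 : (0:ℝ) < N := by exact_mod_cast (by omega : 0 < N)
      have hle := Chebyshev.theta_le_log4_mul_x (x := (N:ℝ)) hN0.le
      have h1 : (if (N+1).Prime then log ((N+1:ℕ):ℝ) / ((N+1:ℕ):ℝ)^2 else 0) =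
        (if (N+1).Prime then log ((N+1:ℕ):ℝ) else 0) / ((N+1:ℕ):ℝ)^2 := by split_ifs <;> simp
      rw [hth, h1, add_div]
      push_cast
      set θ := Chebyshev.theta (N:ℝ)
      have h2 : θ / (N:ℝ)^2 - θ / ((N:ℝ)+1)^2 ≤ 2 * log 4 / N - 2 * log 4 / (N+1) := by
        have e1 : θ / (N:ℝ)^2 - θ / ((N:ℝ)+1)^2 = θ * ((2*N+1) / (N^2 * (N+1)^2)) := by field_simp; ring
        have e2 : 2 * log 4 / N - 2 * log 4 / ((N:ℝ)+1) = log 4 * N * ((2*N+2) / (N^2 * (N+1)^2)) := by field_simp; ring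
        rw [e1, e2]
        apply mul_le_mul hle _ (by positivity) (by positivity)
        gcongr; norm_num
      linarith
  have h := key N hN
  have hN0 : (0:ℝ) < N := by exact_mod_cast (by omega : 0 < N)
  have hle := Chebyshev.theta_le_log4_mul_x (x := (N:ℝ)) hN0.le
  have h1 : Chebyshev.theta N / (N:ℝ)^2 ≤ log 4 / N := by
    rw [div_le_div_iff₀ (by positivity) hN0]; nlinarith
  have h2 : log 4 / N ≤ log 4 / w := by gcongr
  have h3 : 0 ≤ 2 * log 4 / N := by positivity
  have e : 3 * log 4 / w = 2 * log 4 / w + log 4 / w := by ring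
  rw [e]; linarith

lemma omega_bd (n k : ℕ) (hn : 0 < n) (h : ∀ i < k, ¬ pp i ∣ n) :
    (n.primeFactorsList.length : ℝ) * tt k ≤ log n := by
  have h1 : (pp k) ^ n.primeFactorsList.length ≤ n := by
    have := List.pow_card_le_prod n.primeFactorsList (pp k) (by
      intro q hq
      have hqp := Nat.prime_of_mem_primeFactorsList hq
      have hqd := Nat.dvd_of_mem_primeFactorsList hq
      by_contra hcon
      push Not at hcon
      have e : Nat.nth Nat.Prime (Nat.count Nat.Prime q) = q := Nat.nth_count hqp
      have h2 : Nat.count Nat.Prime q < k := by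
        by_contra h3
        push Not at h3
        have := pp_strictMono.monotone h3
        change pp k ≤ Nat.nth Nat.Prime (Nat.count Nat.Prime q) at this
        omega
      apply h _ h2
      change Nat.nth Nat.Prime (Nat.count Nat.Prime q) ∣ n
      rw [e]; exact hqd)
    rwa [Nat.prod_primeFactorsList hn.ne'] at this
  have h2 : ((pp k:ℝ)) ^ n.primeFactorsList.length ≤ n := by exact_mod_cast h1
  have hp := pp_two k
  have := Real.log_le_log (by positivity) h2
  rwa [Real.log_pow] at this

lemma prime_ge (k p : ℕ) (hp : p.Prime) (h : ∀ i < k, pp i ≠ p) : pp k ≤ p := by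
  have e : pp (Nat.count Nat.Prime p) = p := Nat.nth_count hp
  rw [← e]
  apply pp_strictMono.monotone
  by_contra hcon
  push Not at hcon
  exact h _ hcon e

lemma sieve_choice : ∃ (c2 c3 C' L1 : ℝ), 0 < c2 ∧ 0 < c3 ∧ 0 < C' ∧ 0 < L1 ∧ ∀ y u : ℝ, 0 < y → L1 ≤ log y → 0 ≤ u →
    ∃ k, log y / 2 - C' ≤ tt k ∧ c2 * y / (log y)^2 ≤ ((SSet u y k).card : ℝ) ∧
      ∀ p : ℕ, 1 ≤ p → log p ≤ 3/4 * log y → ((SSet (u/p) (y/p) k).card : ℝ) ≤ c3 * (y / p) / log y := by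
  obtain ⟨κ, C0, c, M, A, k0, hκ, hC0, hc, hM, hA, hT, hmain⟩ := sieve
  obtain ⟨m, hm, hlow⟩ := lower_df
  set T : ℕ → ℝ := fun k => κ / VV k with hTd
  have hTpos : ∀ k, 0 < T k := fun k => div_pos hκ (VV_pos k)
  have hTmono : Monotone T := fun i j h => by
    simp only [hTd]; have := VV_anti h; have := VV_pos j; gcongr
  have hTs : ∀ k, T (k+1) ≤ T k + 1 + C0 := by
    intro k
    have hp := pp_two k
    have hV := VV_pos k
    have h1 : T (k+1) = T k + T k / (pp k - 1) := by
      have : (pp k : ℝ) - 1 ≠ 0 := by linarith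
      simp only [hTd, VV_succ]
      have h3 : (1 - 1 / (pp k:ℝ)) = (pp k - 1) / pp k := by field_simp
      rw [h3]
      field_simp; ring
    have h2 : T k / (pp k - 1) ≤ 1 + C0 := by
      rw [div_le_iff₀ (by linarith)]
      have hlog : tt k ≤ pp k - 1 := Real.log_le_sub_one_of_pos (by linarith)
      have := (abs_le.mp (hT k)).2
      change T k - tt k ≤ C0 at this
      nlinarith
    linarith
  set C' := (A+1)/2 + 1 + 2 * C0 with hC'
  have hC'p : 0 < C' := by positivity
  refine ⟨2 * c * m, 8 * c * (8 + M), C', 8 * C' + 2 * T k0 + A + 1 + 16 * M / m + 8 + 8 * A, by positivity, by positivity, hC'p,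
    by have := hTpos k0; positivity, fun y u hy hL hu => ?_⟩
  set L := log y with hLd
  have hTk0 := hTpos k0
  have hMm : 0 < M / m := by positivity
  have hMm' : 16 * M / m = 16 * (M / m) := by ring
  rw [hMm'] at hL
  -- choose k
  have hex : ∃ j, ¬ (2 * T j ≤ L - A - 1) := by
    obtain ⟨j, hj⟩ := (tt_tendsto.eventually_gt_atTop (L + C0)).exists
    refine ⟨j, ?_⟩
    have := (abs_le.mp (hT j)).1
    change -C0 ≤ T j - tt j at this
    push Not
    have := hTpos j
    linarith
  obtain ⟨j, hj1, hjmin⟩ : ∃ j, L - A - 1 < 2 * T j ∧ ∀ i < j, 2 * T i ≤ L - A - 1 := by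
    classical
    exact ⟨Nat.find hex, not_le.mp (Nat.find_spec hex), fun i hi => not_not.mp (Nat.find_min hex hi)⟩
  have hjk0 : k0 < j := by
    by_contra hcon
    push Not at hcon
    have := hTmono hcon
    linarith
  obtain ⟨k, hk⟩ : ∃ k, j = k + 1 := ⟨j - 1, by omega⟩
  have hk0 : k0 ≤ k := by omega
  have hk1 : 2 * T k ≤ L - A - 1 := hjmin k (by omega)
  rw [hk] at hj1
  have hTk := hTpos k
  have hTs' := hTs k
  have hTlow : L / 2 - C' + C0 ≤ T k := by rw [hC']; linarith
  have hTlow2 : L / 8 ≤ T k := by linarith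
  have hT1 : 1 ≤ T k := by linarith
  have hTM : 2 * (M / m) ≤ T k := by linarith
  have hTL : T k ≤ L / 2 := by linarith
  have hLp : 0 < L := by linarith
  obtain ⟨a, ha0, haA, hS⟩ := hmain k hk0
  have hvT : VV k / κ = 1 / T k := by simp only [hTd]; rw [one_div_div]
  rw [hvT] at hS
  refine ⟨k, ?_, ?_, ?_⟩
  · have := (abs_le.mp (hT k)).2
    change T k - tt k ≤ C0 at this
    linarith
  · have h2 := (hS u y hu hy).2
    rw [← hLd] at h2
    set s := (L - a) * (1 / T k) with hs
    have hs1 : 2 + 1 / T k ≤ s := by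
      have : (2 * T k + 1) * (1 / T k) ≤ s := by
        rw [hs]; gcongr; linarith
      calc 2 + 1 / T k = (2 * T k + 1) * (1 / T k) := by field_simp
        _ ≤ s := this
    have hs2 : s ≤ 16 := by
      rw [hs, mul_one_div, div_le_iff₀ hTk]; linarith
    have hT' : 0 < 1 / T k := by positivity
    have h3 := h2 (by linarith)
    have h4 := hlow 2 s le_rfl (by linarith) hs2
    rw [f_of_le 2 le_rfl] at h4
    have h5 : m * (1 / T k) ≤ f s := by
      have : m * (1 / T k) ≤ m * (s - 2) := by gcongr; linarith
      linarith
    refine le_trans ?_ h3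
    have h6 : m / 2 * (1 / T k)^2 ≤ 1 / T k * f s - M * (1 / T k)^3 := by
      have g1 : 1 / T k * (m * (1 / T k)) ≤ 1 / T k * f s := by gcongr
      have g2 : M * (1 / T k) ≤ m / 2 := by
        rw [mul_one_div, div_le_iff₀ hTk]
        have : m / 2 * (2 * (M / m)) ≤ m / 2 * T k := by gcongr
        have e : m / 2 * (2 * (M / m)) = M := by field_simp
        linarith
      have g3 : M * (1 / T k) * (1 / T k)^2 ≤ m / 2 * (1 / T k)^2 := by gcongr
      nlinarith
    have h7 : (2 / L)^2 ≤ (1 / T k)^2 := by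
      have : 2 / L ≤ 1 / T k := by rw [div_le_div_iff₀ hLp hTk]; linarith
      gcongr
    calc 2 * c * m * y / L^2 = c * y * (m / 2 * (2 / L)^2) := by field_simp
      _ ≤ c * y * (m / 2 * (1 / T k)^2) := by gcongr
      _ ≤ _ := by gcongr
  · intro p hp hlp
    have hp0 : (0:ℝ) < p := by exact_mod_cast hp
    have h2 := (hS (u/p) (y/p) (by positivity) (by positivity)).1
    rw [Real.log_div hy.ne' hp0.ne', ← hLd] at h2
    set s := (L - log p - a) * (1 / T k) with hs
    have hs1 : 1/8 ≤ s := by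
      rw [hs, mul_one_div, le_div_iff₀ hTk]; linarith
    have h3 := h2 hs1
    have h4 : F s ≤ 8 := by
      have := F_anti (show (1/8:ℝ) ∈ Set.Ioi 0 by norm_num [Set.mem_Ioi]) (show s ∈ Set.Ioi 0 from by rw [Set.mem_Ioi]; linarith) hs1
      rw [F_of_le (1/8) (by norm_num)] at this
      norm_num at this
      exact this
    refine h3.trans ?_
    have hT' : 0 < 1 / T k := by positivity
    have hT1' : 1 / T k ≤ 1 := by rw [div_le_one hTk]; exact hT1
    have h5 : 1 / T k * F s + M * (1 / T k)^3 ≤ (8 + M) * (8 / L) := by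
      have g1 : 1 / T k * F s ≤ 1 / T k * 8 := by gcongr
      have g2 : (1 / T k)^3 ≤ 1 / T k := pow_le_of_le_one hT'.le hT1' (by norm_num)
      have g3 : 1 / T k ≤ 8 / L := by rw [div_le_div_iff₀ hTk hLp]; linarith
      have g4 : M * (1 / T k)^3 ≤ M * (1 / T k) := by gcongr
      have g5 : (8 + M) * (1 / T k) ≤ (8 + M) * (8 / L) := by gcongr
      linarith
    calc _ ≤ c * (y / p) * ((8 + M) * (8 / L)) := by gcongr
      _ = _ := by ring

end LSieve

open Real
namespace LSieve
open Finset Filter Topology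

lemma prime_sq_sum' (w N : ℕ) (hw : 1 ≤ w) :
    ∑ n ∈ Ioc w N, (if n.Prime then log n / (n:ℝ)^2 else 0) ≤ 3 * log 4 / w := by
  rcases le_total w N with h | h
  · exact prime_sq_sum w N hw h
  · rw [Ioc_eq_empty (by omega), sum_empty]
    have l4 : 0 ≤ log 4 := Real.log_nonneg (by norm_num)
    positivity

lemma pair_count (u y : ℝ) (hu : 0 ≤ u) (hy : 0 ≤ y) (k : ℕ)
    [DecidableRel (fun m n : ℕ => m ≠ n ∧ ¬ Nat.Coprime m n)] :
    (((SSet u y k ×ˢ SSet u y k).filter (fun x => x.1 ≠ x.2 ∧ ¬ Nat.Coprime x.1 x.2)).card : ℝ) ≤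
    ∑ p ∈ Ioc (pp k - 1) ⌊y⌋₊, (if p.Prime then ((SSet (u/p) (y/p) k).card : ℝ)^2 else 0) := by
  classical
  set G := SSet u y k with hG
  have hsub : (G ×ˢ G).filter (fun x => x.1 ≠ x.2 ∧ ¬ Nat.Coprime x.1 x.2) ⊆
      ((Ioc (pp k - 1) ⌊y⌋₊).filter Nat.Prime).biUnion
        (fun p => (G.filter (p ∣ ·)) ×ˢ (G.filter (p ∣ ·))) := by
    rintro ⟨m, n⟩ h
    rw [mem_filter, mem_product] at h
    obtain ⟨⟨hm, hn⟩, hne, hco⟩ := h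
    obtain ⟨p, hp, hpm, hpn⟩ := Nat.Prime.not_coprime_iff_dvd.mp hco
    have hm' := (mem_SSet hu hy m).mp hm
    have hn' := (mem_SSet hu hy n).mp hn
    have h1 : pp k ≤ p := prime_ge k p hp (fun i hi he => hm'.2 i hi (he ▸ hpm))
    have h2 : p ≤ ⌊y⌋₊ := by
      apply Nat.le_floor
      rcases lt_or_gt_of_ne hne with hlt | hlt
      · have := Nat.le_of_dvd (Nat.sub_pos_of_lt hlt) (Nat.dvd_sub hpn hpm)
        have h3 : p + m ≤ n := by simp only at hlt this; omega
        have h4 : (p:ℝ) + m ≤ n := by exact_mod_cast h3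
        linarith [hm'.1.1, hn'.1.2]
      · have := Nat.le_of_dvd (Nat.sub_pos_of_lt hlt) (Nat.dvd_sub hpm hpn)
        have h3 : p + n ≤ m := by simp only at hlt this; omega
        have h4 : (p:ℝ) + n ≤ m := by exact_mod_cast h3
        linarith [hn'.1.1, hm'.1.2]
    have h0 := hp.pos
    rw [mem_biUnion]
    refine ⟨p, mem_filter.mpr ⟨mem_Ioc.mpr ⟨by omega, h2⟩, hp⟩, ?_⟩
    exact mem_product.mpr ⟨mem_filter.mpr ⟨hm, hpm⟩, mem_filter.mpr ⟨hn, hpn⟩⟩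
  have h1 := (card_le_card hsub).trans card_biUnion_le
  have h2 : ((∑ p ∈ (Ioc (pp k - 1) ⌊y⌋₊).filter Nat.Prime,
      ((G.filter (p ∣ ·)) ×ˢ (G.filter (p ∣ ·))).card : ℕ) : ℝ) =
      ∑ p ∈ Ioc (pp k - 1) ⌊y⌋₊, (if p.Prime then ((SSet (u/p) (y/p) k).card : ℝ)^2 else 0) := by
    rw [← sum_filter, Nat.cast_sum]
    apply sum_congr rfl
    intro p hp
    rw [mem_filter, mem_Ioc] at hp
    rw [card_product, card_dvd k hu hy p hp.2 (fun i hi he => by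
      have := pp_strictMono hi
      omega)]
    push_cast; ring
  rw [← h2]
  refine le_trans ?_ (Nat.cast_le.mpr h1)
  apply le_of_eq
  congr

lemma sum_bound (y u c3 t : ℝ) (k : ℕ) (hu : 0 ≤ u) (ht : 2 ≤ t) (hy : y = t^4) (hc3 : 0 < c3)
    (hL : 4 ≤ log y) (htt : 0 < tt k)
    (hN : ∀ p : ℕ, 1 ≤ p → log p ≤ 3/4 * log y → ((SSet (u/p) (y/p) k).card : ℝ) ≤ c3 * (y / p) / log y) :
    ∑ p ∈ Ioc (pp k - 1) ⌊y⌋₊, (if p.Prime then ((SSet (u/p) (y/p) k).card : ℝ)^2 else 0) ≤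
      c3^2 * y^2 / ((log y)^2 * tt k) * (6 * log 4 / pp k) + 4 * y^2 * (6 * log 4 / t^3) := by
  have hy0 : 0 < y := by rw [hy]; positivity
  have l4 : 0 ≤ log 4 := Real.log_nonneg (by norm_num)
  set L := log y with hLd
  set w := ⌊t^3⌋₊ with hw
  set A := c3^2 * y^2 / (L^2 * tt k) with hA
  have hA0 : 0 ≤ A := by positivity
  have ht3 : (8:ℝ) ≤ t^3 := by
    calc (8:ℝ) = 2^3 := by norm_num
      _ ≤ t^3 := by gcongr
  have hw1 : t^3 / 2 ≤ w := by
    have := Nat.lt_floor_add_one (t^3)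
    rw [← hw] at this; linarith
  have hw2 : 1 ≤ w := by
    have : (0:ℝ) < w := by linarith
    exact_mod_cast this
  have hpp := pp_two k
  have hpk2 : 2 ≤ pp k := by exact_mod_cast hpp
  have hlt : L = 4 * log t := by rw [hLd, hy, Real.log_pow]; norm_num
  have hterm : ∀ p ∈ Ioc (pp k - 1) ⌊y⌋₊, (if p.Prime then ((SSet (u/p) (y/p) k).card : ℝ)^2 else 0) ≤
      A * (if p.Prime then log p / (p:ℝ)^2 else 0) +
      4 * y^2 * (if w < p then (if p.Prime then log p / (p:ℝ)^2 else 0) else 0) := by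
    intro p hp
    rw [mem_Ioc] at hp
    by_cases hpr : p.Prime
    swap
    · simp [hpr]
    simp only [hpr, if_true]
    have hp1 : 1 ≤ p := hpr.one_le
    have hp0 : (0:ℝ) < p := by exact_mod_cast hp1
    have hlp0 : 0 ≤ log (p:ℝ) := Real.log_nonneg (by exact_mod_cast hp1)
    have hq : 0 ≤ log p / (p:ℝ)^2 := by positivity
    by_cases hc : log p ≤ 3/4 * L
    · have h1 := hN p hp1 hc
      have h2 : ((SSet (u/p) (y/p) k).card : ℝ)^2 ≤ (c3 * (y / p) / L)^2 := by gcongr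
      have htp : tt k ≤ log p := by
        have : pp k ≤ p := by omega
        exact Real.log_le_log (by linarith) (by exact_mod_cast this)
      have h3 : (c3 * (y / p) / L)^2 ≤ A * (log p / (p:ℝ)^2) := by
        have hL0 : 0 < L := by linarith
        have e1 : A * (log p / (p:ℝ)^2) = (c3 * (y / p) / L)^2 * (log p / tt k) := by
          rw [hA]; field_simp
        rw [e1]
        apply le_mul_of_one_le_right (by positivity)
        rw [one_le_div htt]; exact htp
      have h4 : 0 ≤ 4 * y^2 * (if w < p then log p / (p:ℝ)^2 else 0) := by
        split_ifs <;> positivity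
      linarith
    · rw [not_le] at hc
      have hl1 : 1 ≤ log (p:ℝ) := by linarith
      have hpt : t^3 < p := by
        have : log (t^3) < log p := by rw [Real.log_pow]; push_cast; linarith
        exact (Real.log_lt_log_iff (by positivity) hp0).mp this
      have hwp : w < p := (Nat.floor_lt (by positivity)).mpr hpt
      rw [if_pos hwp]
      have hple : (p:ℝ) ≤ y := (Nat.cast_le.mpr hp.2).trans (Nat.floor_le hy0.le)
      have hup : 0 ≤ u / p := by positivity
      have hyp : 0 ≤ y / p := by positivity
      have hs : SSet (u/p) (y/p) k ⊆ SSet (u/p) (y/p) 0 := by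
        intro n hn
        rw [mem_SSet hup hyp] at hn ⊢
        exact ⟨hn.1, fun i hi => absurd hi (Nat.not_lt_zero i)⟩
      have hb := (abs_le.mp (base_bd 0 (u/p) (y/p) hup hyp)).2
      have hV0 : VV 0 = 1 := by simp [VV]
      rw [hV0] at hb
      have hcc : ((SSet (u/p) (y/p) k).card : ℝ) ≤ ((SSet (u/p) (y/p) 0).card : ℝ) := by
        exact_mod_cast card_le_card hs
      have h1y : 1 ≤ y / p := by rw [one_le_div hp0]; exact hple
      have h5 : ((SSet (u/p) (y/p) k).card : ℝ) ≤ 2 * (y / p) := by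
        norm_num at hb; linarith
      have h6 : ((SSet (u/p) (y/p) k).card : ℝ)^2 ≤ (2 * (y / p))^2 := by gcongr
      have h7 : (2 * (y / p))^2 ≤ 4 * y^2 * (log p / (p:ℝ)^2) := by
        have e : 4 * y^2 * (log p / (p:ℝ)^2) = (2 * (y / p))^2 * log p := by field_simp; norm_num
        rw [e]
        exact le_mul_of_one_le_right (by positivity) hl1
      have h8 : 0 ≤ A * (log p / (p:ℝ)^2) := by positivity
      linarith
  refine (sum_le_sum hterm).trans ?_
  rw [sum_add_distrib, ← mul_sum, ← mul_sum]
  have hz0 : (0:ℝ) < pp k := by linarith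
  have e1 : ∑ p ∈ Ioc (pp k - 1) ⌊y⌋₊, (if p.Prime then log p / (p:ℝ)^2 else 0) ≤ 6 * log 4 / pp k := by
    refine (prime_sq_sum' (pp k - 1) ⌊y⌋₊ (by omega)).trans ?_
    rw [Nat.cast_sub (by omega), Nat.cast_one, div_le_div_iff₀ (by linarith) hz0]
    nlinarith
  have e2 : ∑ p ∈ Ioc (pp k - 1) ⌊y⌋₊, (if w < p then (if p.Prime then log p / (p:ℝ)^2 else 0) else 0) ≤ 6 * log 4 / t^3 := by
    rw [← sum_filter]
    have hnn : ∀ i : ℕ, (0:ℝ) ≤ (if i.Prime then log i / (i:ℝ)^2 else 0) := by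
      intro i
      split_ifs with h
      · have := Real.log_nonneg (show (1:ℝ) ≤ i by exact_mod_cast h.one_le)
        positivity
      · exact le_rfl
    refine (sum_le_sum_of_subset_of_nonneg (t := Ioc w ⌊y⌋₊) ?_ (fun i _ _ => hnn i)).trans ?_
    · intro i hi
      rw [mem_filter, mem_Ioc] at hi
      exact mem_Ioc.mpr ⟨hi.2, hi.1.2⟩
    refine (prime_sq_sum' w ⌊y⌋₊ hw2).trans ?_
    have : (0:ℝ) < w := by linarith
    rw [div_le_div_iff₀ this (by linarith)]
    nlinarith
  gcongr

lemma final_arith (S N D N0 D0 : ℝ) (hS : 0 ≤ S) (hN0 : 0 < N0) (hN : N0 ≤ N) (hD : 0 ≤ D) (hDD : D ≤ D0)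
    (h : N^2 ≤ S * (2 * N + 4 * D)) : N0^2 ≤ S * (2 * N0 + 4 * D0) := by
  have hNp : 0 < N := by linarith
  have h1 : N0^2 * (2 * N + 4 * D) ≤ N^2 * (2 * N0 + 4 * D) := by
    have a : N0^2 * N ≤ N^2 * N0 := by nlinarith [mul_nonneg (mul_pos hN0 hNp).le (sub_nonneg.mpr hN)]
    have b : N0^2 * D ≤ N^2 * D := by gcongr
    linarith
  have h2 : N^2 * N0^2 ≤ N^2 * (S * (2 * N0 + 4 * D)) := by
    calc N^2 * N0^2 ≤ (S * (2 * N + 4 * D)) * N0^2 := by gcongr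
      _ = S * (N0^2 * (2 * N + 4 * D)) := by ring
      _ ≤ S * (N^2 * (2 * N0 + 4 * D)) := by gcongr
      _ = _ := by ring
  have h3 := le_of_mul_le_mul_left h2 (by positivity)
  refine h3.trans ?_
  gcongr

lemma log_event : ∀ᶠ t : ℝ in atTop, (4 * log t)^3 ≤ t := by
  have h := isLittleO_pow_log_id_atTop (n := 3)
  have h2 := h.def (show (0:ℝ) < 1/64 by norm_num)
  filter_upwards [h2, eventually_ge_atTop (1:ℝ)] with t ht h1
  have hl := Real.log_nonneg h1
  rw [id, Real.norm_of_nonneg (by positivity), Real.norm_of_nonneg (by linarith)] at ht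
  nlinarith

end LSieve

theorem coprime_subset_with_few_prime_factors :
    ∃ c : ℝ, 0 < c ∧ ∃ C : ℝ, 0 < C ∧ ∃ Y : ℝ, ∀ y : ℝ, Y ≤ y → ∀ x : ℝ, y + 1 ≤ x →
      ∃ S : Finset ℕ,
        (∀ n ∈ S, 0 < n ∧ x - y ≤ (n : ℝ) ∧ (n : ℝ) ≤ x) ∧
        (∀ m ∈ S, ∀ n ∈ S, m ≠ n → Nat.Coprime m n) ∧
        c * Real.sqrt y / log y ≤ (S.card : ℝ) ∧
        (∀ n ∈ S, ((n.primeFactorsList.length : ℝ)) ≤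
          2 * log x / log y + C * log x / (log y) ^ 2) := by
  classical
  obtain ⟨c2, c3, C', L1, hc2, hc3, hC', hL1, hmain⟩ := LSieve.sieve_choice
  obtain ⟨t0, ht0⟩ := Filter.eventually_atTop.mp LSieve.log_event
  have l4 : 0 < log 4 := Real.log_pos (by norm_num)
  set c5 := 24 * log 4 * (c3^2 * exp C' + 1) with hc5
  have hc5p : 0 < c5 := by positivity
  refine ⟨c2^2 / (2 * c2 + 4 * c5), by positivity, 8 * C', by positivity,
    max (exp (L1 + 4 * C' + 4)) ((max t0 2)^4), fun y hy x hx => ?_⟩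
  have hy1 : exp (L1 + 4 * C' + 4) ≤ y := (le_max_left _ _).trans hy
  have hy2 : (max t0 2)^4 ≤ y := (le_max_right _ _).trans hy
  have hy0 : 0 < y := (exp_pos _).trans_le hy1
  have hLbig : L1 + 4 * C' + 4 ≤ log y := by rwa [Real.le_log_iff_exp_le hy0]
  set t := Real.sqrt (Real.sqrt y) with ht
  have hsq : Real.sqrt y = t^2 := by rw [ht, Real.sq_sqrt (Real.sqrt_nonneg _)]
  have hyt : y = t^4 := by
    calc y = (Real.sqrt y)^2 := (Real.sq_sqrt hy0.le).symm
      _ = t^4 := by rw [hsq]; ring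
  have htt0 : 0 ≤ t := Real.sqrt_nonneg _
  have htm : max t0 2 ≤ t := by
    rw [hyt] at hy2
    exact le_of_pow_le_pow_left₀ (by norm_num) htt0 hy2
  have ht2 : 2 ≤ t := (le_max_right _ _).trans htm
  have hlog3 := ht0 t ((le_max_left _ _).trans htm)
  have hlt : log y = 4 * log t := by rw [hyt, Real.log_pow]; norm_num
  rw [← hlt] at hlog3
  have hu : 0 ≤ x - y := by linarith
  obtain ⟨k, hk1, hk2, hk3⟩ := hmain y (x - y) hy0 (by linarith) hu
  set L := log y with hL
  have hL4 : 4 ≤ L := by linarith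
  have hLp : 0 < L := by linarith
  have htk : L / 4 ≤ LSieve.tt k := by linarith
  have httk : 0 < LSieve.tt k := by linarith
  have hs1 := LSieve.pair_count (x - y) y hu hy0.le k
  have hs2 := LSieve.sum_bound y (x - y) c3 t k hu ht2 hyt hc3 hL4 httk hk3
  rw [← hL] at hs2
  have hppl : t^2 * exp (-C') ≤ LSieve.pp k := by
    have h2 := LSieve.pp_two k
    have e1 : t^2 = exp (L / 2) := by
      have : (0:ℝ) < t^2 := by positivity
      rw [hlt, ← Real.exp_log this, Real.log_pow]; congr 1; push_cast; ring
    rw [e1, ← Real.exp_add, ← Real.le_log_iff_exp_le (by linarith)]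
    change _ ≤ LSieve.tt k
    linarith
  have hppp : (0:ℝ) < LSieve.pp k := by linarith [LSieve.pp_two k]
  set D := c5 * t^6 / L^3 with hD
  have hDb : c3^2 * y^2 / (L^2 * LSieve.tt k) * (6 * log 4 / LSieve.pp k) + 4 * y^2 * (6 * log 4 / t^3) ≤ D := by
    have a1 : c3^2 * y^2 / (L^2 * LSieve.tt k) * (6 * log 4 / LSieve.pp k) ≤
        c3^2 * y^2 / (L^2 * (L / 4)) * (6 * log 4 / (t^2 * exp (-C'))) := by
      gcongr
    have a2 : c3^2 * y^2 / (L^2 * (L / 4)) * (6 * log 4 / (t^2 * exp (-C'))) =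
        24 * log 4 * (c3^2 * exp C') * t^6 / L^3 := by
      rw [Real.exp_neg, hyt]; field_simp; norm_num
    have a3 : 4 * y^2 * (6 * log 4 / t^3) = 24 * log 4 * t^5 := by
      rw [hyt]; field_simp; norm_num
    have a4 : 24 * log 4 * t^5 ≤ 24 * log 4 * t^6 / L^3 := by
      rw [le_div_iff₀ (by positivity)]
      calc 24 * log 4 * t^5 * L^3 ≤ 24 * log 4 * t^5 * t := by gcongr
        _ = _ := by ring
    have a5 : D = 24 * log 4 * (c3^2 * exp C') * t^6 / L^3 + 24 * log 4 * t^6 / L^3 := by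
      rw [hD, hc5]; ring
    rw [a5, a3]
    linarith
  have hDD := hs1.trans (hs2.trans hDb)
  obtain ⟨S, hSG, hSr, hScard⟩ := LSieve.indep_exists (LSieve.SSet (x - y) y k)
    (fun m n => m ≠ n ∧ ¬ Nat.Coprime m n)
    (fun a b h => ⟨h.1.symm, fun hc => h.2 hc.symm⟩) (fun a h => h.1 rfl) D hDD
  have hmem : ∀ n ∈ S, (x - y < n ∧ (n:ℝ) ≤ x) ∧ ∀ i < k, ¬ LSieve.pp i ∣ n := by
    intro n hn
    have := (LSieve.mem_SSet hu hy0.le n).mp (hSG hn)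
    exact ⟨⟨this.1.1, by linarith [this.1.2]⟩, this.2⟩
  have hpos : ∀ n ∈ S, 0 < n := by
    intro n hn
    have := (hmem n hn).1.1
    have : (0:ℝ) < n := by linarith
    exact_mod_cast this
  refine ⟨S, fun n hn => ⟨hpos n hn, (hmem n hn).1.1.le, (hmem n hn).1.2⟩, ?_, ?_, ?_⟩
  · intro m hm n hn hne
    by_contra hcon
    exact hSr m hm n hn ⟨hne, hcon⟩
  · have hN0 : 0 < c2 * y / L^2 := by positivity
    have h1 := LSieve.final_arith S.card _ D (c2 * y / L^2) D (Nat.cast_nonneg _) hN0 hk2 (by positivity) le_rfl hScard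
    have hLt : L ≤ t^2 := by
      have b1 : L ≤ L^3 := le_self_pow₀ (by linarith) (by norm_num)
      have b2 : t ≤ t^2 := le_self_pow₀ (by linarith) (by norm_num)
      linarith
    have h2 : c2 * y / L^2 ≤ c2 * t^6 / L^3 := by
      rw [div_le_div_iff₀ (by positivity) (by positivity), hyt]
      calc c2 * t^4 * L^3 = c2 * t^4 * L^2 * L := by ring
        _ ≤ c2 * t^4 * L^2 * t^2 := by gcongr
        _ = _ := by ring
    have h3 : (c2 * y / L^2)^2 ≤ S.card * ((2 * c2 + 4 * c5) * t^6 / L^3) := by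
      refine h1.trans ?_
      have : 2 * (c2 * y / L^2) + 4 * D ≤ (2 * c2 + 4 * c5) * t^6 / L^3 := by
        have e : (2 * c2 + 4 * c5) * t^6 / L^3 = 2 * (c2 * t^6 / L^3) + 4 * D := by rw [hD]; ring
        rw [e]; linarith
      exact mul_le_mul_of_nonneg_left this (Nat.cast_nonneg _)
    set Q := (2 * c2 + 4 * c5) * t^6 / L^3 with hQ
    have hQ0 : 0 < Q := by positivity
    have h4 : c2^2 / (2 * c2 + 4 * c5) * t^2 / L * Q = (c2 * y / L^2)^2 := by
      rw [hQ, hyt]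
      have : 2 * c2 + 4 * c5 ≠ 0 := by positivity
      field_simp
    rw [hsq]
    rw [← h4] at h3
    exact le_of_mul_le_mul_right h3 hQ0
  · intro n hn
    have h1 := LSieve.omega_bd n k (hpos n hn) (hmem n hn).2
    have hn0 : (0:ℝ) < n := by exact_mod_cast hpos n hn
    have h2 : log n ≤ log x := Real.log_le_log hn0 (hmem n hn).1.2
    have hx0 : 0 ≤ log x := Real.log_nonneg (by linarith)
    have h3 : (n.primeFactorsList.length : ℝ) * (L / 2 - C') ≤ log x := by
      calc _ ≤ (n.primeFactorsList.length : ℝ) * LSieve.tt k := by gcongr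
        _ ≤ _ := h1.trans h2
    have hd : 0 < L / 2 - C' := by linarith
    have h4 : 1 ≤ (2 / L + 8 * C' / L^2) * (L / 2 - C') := by
      have e : (2 / L + 8 * C' / L^2) * (L / 2 - C') = 1 + 2 * C' * (L - 4 * C') / L^2 := by
        field_simp; ring
      rw [e]
      have : 0 ≤ L - 4 * C' := by linarith
      have : 0 ≤ 2 * C' * (L - 4 * C') / L^2 := by positivity
      linarith
    have h5 : (n.primeFactorsList.length : ℝ) * (L / 2 - C') ≤ (2 * log x / L + 8 * C' * log x / L^2) * (L / 2 - C') := by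
      calc _ ≤ log x * 1 := by linarith
        _ ≤ log x * ((2 / L + 8 * C' / L^2) * (L / 2 - C')) := by gcongr
        _ = _ := by ring
    exact le_of_mul_le_mul_right h5 hd
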